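/- Let (Ω, 𝒜, μ) be a σ-finite measure space and T₁,…,T_d a commuting family of positive Dunford–Schwartz operators. Then for every f ∈ R_μ and every sequence n(k) ∈ ℕ^d with n(k) → ∞ that remains in a sector of ℕ^d, the averages A_{n(k)}(f) converge almost uniformly as k → ∞ to some f̂ ∈ R_μ. -/

import Mathlib

open MeasureTheory Filter Set ENNReal Topology

variable {Ω : Type*} [MeasurableSpace Ω]

/-- `f` belongs to `L¹(μ) + L^∞(μ)`. -/
def MemL1pLinf (μ : Measure Ω) (f : Ω →ₘ[μ] ℝ) : Prop :=
  ∃ g h : Ω →ₘ[μ] ℝ, eLpNorm g 1 μ ≠ ∞ ∧ eLpNorm h ⊤ μ ≠ ∞ ∧ f = g + h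

/-- A positive Dunford–Schwartz operator: linear and positive on `L¹+L^∞`,
contracting both the `L¹`- and `L^∞`-norms. -/
structure IsPosDS (μ : Measure Ω) (T : (Ω →ₘ[μ] ℝ) → (Ω →ₘ[μ] ℝ)) : Prop where
  map_add : ∀ f g, MemL1pLinf μ f → MemL1pLinf μ g → T (f + g) = T f + T g
  map_smul : ∀ (c : ℝ) (f), MemL1pLinf μ f → T (c • f) = c • T f
  map_pos : ∀ f, MemL1pLinf μ f → 0 ≤ f → 0 ≤ T f
  norm_one : ∀ f, MemL1pLinf μ f → eLpNorm (T f) 1 μ ≤ eLpNorm f 1 μ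
  norm_top : ∀ f, MemL1pLinf μ f → eLpNorm (T f) ⊤ μ ≤ eLpNorm f ⊤ μ

/-- The Cesàro averages `A_n(f) = (1/n) ∑_{k<n} T^k f`. -/
noncomputable def cesaro (μ : Measure Ω) (T : (Ω →ₘ[μ] ℝ) → (Ω →ₘ[μ] ℝ)) (n : ℕ)
    (f : Ω →ₘ[μ] ℝ) : Ω →ₘ[μ] ℝ :=
  (n : ℝ)⁻¹ • ∑ k ∈ Finset.range n, T^[k] f

/-- Almost uniform convergence of a net `F` to `f`. -/
def AuTendsto {ι : Type*} (μ : Measure Ω) (l : Filter ι) (F : ι → Ω →ₘ[μ] ℝ)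
    (f : Ω →ₘ[μ] ℝ) : Prop :=
  ∀ ε : ℝ, 0 < ε → ∃ E : Set Ω, MeasurableSet E ∧ μ Eᶜ ≤ ENNReal.ofReal ε ∧
    Tendsto (fun i => eLpNorm (E.indicator (⇑(F i - f))) ⊤ μ) l (𝓝 0)

/-- `R_μ`: elements of `L¹+L^∞` whose distribution tails are finite. -/
def MemRmu (μ : Measure Ω) (f : Ω →ₘ[μ] ℝ) : Prop :=
  MemL1pLinf μ f ∧ ∀ lam : ℝ, 0 < lam → μ {ω | lam < |f ω|} < ∞

/-- `T₁^{k₁} ∘ ⋯ ∘ T_d^{k_d}` for a family `T` of operators. -/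
def iterComp {E : Type*} {d : ℕ} (T : Fin d → E → E) (k : Fin d → ℕ) : E → E :=
  (List.ofFn fun i => (T i)^[k i]).foldr (· ∘ ·) id

/-- The multiparameter averages
`A_n(f) = (n₁⋯n_d)⁻¹ ∑_{i₁<n₁} ⋯ ∑_{i_d<n_d} T₁^{i₁}⋯T_d^{i_d} f`. -/
noncomputable def multiAvg (μ : Measure Ω) {d : ℕ}
    (T : Fin d → (Ω →ₘ[μ] ℝ) → (Ω →ₘ[μ] ℝ)) (n : Fin d → ℕ)
    (f : Ω →ₘ[μ] ℝ) : Ω →ₘ[μ] ℝ :=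
  (∏ i, (n i : ℝ))⁻¹ •
    ∑ k ∈ Fintype.piFinset (fun i => Finset.range (n i)), iterComp T k f

/-- A sequence `n(k) ∈ ℕ^d` remains in a sector of `ℕ^d`. -/
def InSector {d : ℕ} (n : ℕ → Fin d → ℕ) : Prop :=
  ∃ c₀ : ℝ, ∀ k, ∀ i j, n k j ≠ 0 → (n k i : ℝ) / (n k j : ℝ) ≤ c₀

open PowerSeries in
noncomputable def bpsi : PowerSeries ℝ := PowerSeries.mk fun k => (catalan k : ℝ) / 2^(2*k+1)

noncomputable def bco (k m : ℕ) : ℝ := PowerSeries.coeff k (bpsi ^ m)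

lemma bpsi_eq : bpsi = PowerSeries.C (1/2:ℝ) + PowerSeries.C (1/2:ℝ) * (PowerSeries.X * bpsi^2) := by
  ext k
  rcases k with _ | k
  · simp [bpsi, PowerSeries.coeff_zero_eq_constantCoeff]
  · simp only [map_add, PowerSeries.coeff_C_mul, PowerSeries.coeff_succ_X_mul]
    rw [pow_two, PowerSeries.coeff_mul]
    simp only [bpsi, PowerSeries.coeff_mk, PowerSeries.coeff_C, catalan_succ']
    rw [if_neg (by simp)]
    push_cast
    rw [zero_add, Finset.mul_sum, Finset.sum_div]
    refine Finset.sum_congr rfl fun x hx => ?_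
    rw [Finset.HasAntidiagonal.mem_antidiagonal] at hx
    rw [← hx]
    field_simp
    ring

lemma bco_zero_right (k : ℕ) : bco (k+1) 0 = 0 := by
  simp [bco, PowerSeries.coeff_one]

lemma bco_rec (k m : ℕ) : bco k (m+2) = 2 * bco (k+1) (m+1) - bco (k+1) m := by
  have h : bpsi^(m+1) = PowerSeries.C (1/2:ℝ) * bpsi^m + PowerSeries.C (1/2:ℝ) * (PowerSeries.X * bpsi^(m+2)) := by
    rw [pow_succ]
    nth_rewrite 2 [bpsi_eq]
    ring
  have := congrArg (PowerSeries.coeff (k+1)) h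
  simp only [map_add, PowerSeries.coeff_C_mul, PowerSeries.coeff_succ_X_mul] at this
  simp only [bco]
  linarith

lemma bco_formula (m : ℕ) : ∀ k, bco k (m+1) =
    (m+1) * ((2*k+m).factorial : ℝ) / ((k.factorial : ℝ) * ((k+m+1).factorial : ℝ)) / 2^(2*k+m+1) := by
  induction m using Nat.strong_induction_on with
  | _ m ih =>
    intro k
    have base : ∀ k, bco k (0+1) = (((0:ℕ):ℝ)+1) * ((2*k+0).factorial : ℝ) / ((k.factorial : ℝ) * ((k+0+1).factorial : ℝ)) / 2^(2*k+0+1) := by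
      intro k
      have h1 : ((k:ℝ)+1) * catalan k = Nat.centralBinom k := by
        exact_mod_cast succ_mul_catalan_eq_centralBinom k
      have h2 : (Nat.centralBinom k : ℝ) * (k.factorial * k.factorial) = (2*k).factorial := by
        have := Nat.add_choose_mul_factorial_mul_factorial k k
        rw [Nat.centralBinom_eq_two_mul_choose, two_mul]
        rw [← this]; push_cast; ring
      simp only [bco, zero_add, pow_one, bpsi, PowerSeries.coeff_mk, add_zero]
      congr 1
      rw [← h2, ← h1, Nat.factorial_succ]
      push_cast
      field_simp
      ring
    rcases m with _ | _ | m
    · simpa using base k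
    · rw [bco_rec, bco_zero_right, base]
      have e1 : 2*(k+1)+0 = 2*k+1+1 := by ring
      have e2 : k+1+0+1 = k+1+1 := by ring
      rw [e1, e2, Nat.factorial_succ (2*k+1), Nat.factorial_succ k]
      simp only [zero_add]
      have e3 : (2:ℝ)^(2*k+1+1+1) = 2 * 2^(2*k+1+1) := by ring
      rw [e3]
      push_cast
      field_simp
      ring
    · rw [bco_rec, ih (m+1) (by omega), ih m (by omega)]
      have e1 : 2*(k+1)+(m+1) = 2*k+m+2+1 := by ring
      have e2 : k+1+(m+1)+1 = k+m+1+1+1 := by ring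
      have e3 : 2*(k+1)+m = 2*k+m+2 := by ring
      have e4 : k+1+m+1 = k+m+1+1 := by ring
      have e5 : 2*k+(m+1+1) = 2*k+m+2 := by ring
      have e6 : k+(m+1+1)+1 = k+m+1+1+1 := by ring
      simp only [e1, e2, e3, e4, e5, e6]
      rw [Nat.factorial_succ (2*k+m+2), Nat.factorial_succ k, Nat.factorial_succ (k+m+1+1)]
      have e7 : (2:ℝ)^(2*k+m+2+1+1) = 2 * 2^(2*k+m+2+1) := by ring
      rw [e7]
      push_cast
      field_simp
      ring

lemma bco_nonneg (k m : ℕ) : 0 ≤ bco k m := by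
  rcases m with _ | m
  · simp only [bco, pow_zero, PowerSeries.coeff_one]; split_ifs <;> norm_num
  · rw [bco_formula]; positivity

lemma bco_one_eq (k : ℕ) : bco k 1 = (Nat.centralBinom k : ℝ) / 4^k / (2*(k+1)) := by
  have h1 : ((k:ℝ)+1) * catalan k = Nat.centralBinom k := by
    exact_mod_cast succ_mul_catalan_eq_centralBinom k
  simp only [bco, pow_one, bpsi, PowerSeries.coeff_mk]
  rw [← h1, pow_succ, pow_mul]
  norm_num
  field_simp

lemma bco_one_sum (M : ℕ) : ∑ k ∈ Finset.range M, bco k 1 = 1 - (Nat.centralBinom M : ℝ) / 4^M := by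
  induction M with
  | zero => simp
  | succ M ih =>
    rw [Finset.sum_range_succ, ih, bco_one_eq]
    have h : ((M:ℝ)+1) * Nat.centralBinom (M+1) = 2*(2*M+1) * Nat.centralBinom M := by
      exact_mod_cast Nat.succ_mul_centralBinom_succ M
    have h' : (Nat.centralBinom (M+1) : ℝ) = 2*(2*M+1) * Nat.centralBinom M / (M+1) := by
      field_simp; linarith
    rw [h', pow_succ]
    field_simp
    ring

lemma bco_one_sum_le (M : ℕ) : ∑ k ∈ Finset.range M, bco k 1 ≤ 1 := by
  rw [bco_one_sum]
  have : (0:ℝ) ≤ (Nat.centralBinom M : ℝ) / 4^M := by positivity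
  linarith

lemma cb_lower (k : ℕ) : 1 / (2 * Real.sqrt (k+1)) ≤ (Nat.centralBinom k : ℝ) / 4^k := by
  have key : ∀ k : ℕ, 1 ≤ (4 * ((k:ℝ)+1)) * ((Nat.centralBinom k : ℝ) / 4^k)^2 - ((Nat.centralBinom k : ℝ) / 4^k)^2 * 3 := by
    intro k
    induction k with
    | zero => simp; norm_num
    | succ M ih =>
      have h : ((M:ℝ)+1) * Nat.centralBinom (M+1) = 2*(2*M+1) * Nat.centralBinom M := by
        exact_mod_cast Nat.succ_mul_centralBinom_succ M
      have h' : (Nat.centralBinom (M+1) : ℝ) / 4^(M+1) = (2*M+1)/(2*(M+1)) * (Nat.centralBinom M / 4^M) := by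
        rw [pow_succ]; field_simp; linarith
      rw [h']
      set c := (Nat.centralBinom M : ℝ) / 4^M
      have : 4 * (((M+1:ℕ):ℝ)+1) * ((2*M+1)/(2*(M+1)) * c)^2 - ((2*M+1)/(2*(M+1)) * c)^2 * 3
        = (4 * ((M:ℝ)+1) * c^2 - c^2*3) + c^2 * (1/(4*(M+1)^2)) * (4*M^2+8*M+5 - (4*M^2+ 4*M) + (4*M^2+4*M-(4*M^2+8*M+4))) := by
        push_cast
        field_simp
        ring
      rw [this]
      have : 0 ≤ c^2 * (1/(4*((M:ℝ)+1)^2)) * (4*M^2+8*M+5 - (4*M^2+ 4*M) + (4*M^2+4*M-(4*M^2+8*M+4))) := by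
        have : (4*(M:ℝ)^2+8*M+5 - (4*M^2+ 4*M) + (4*M^2+4*M-(4*M^2+8*M+4))) = 1 := by ring
        rw [this]; positivity
      linarith
  have h := key k
  set c := (Nat.centralBinom k : ℝ) / 4^k
  have hc : 0 ≤ c := by positivity
  have hs : 0 < Real.sqrt (k+1) := by positivity
  have hs2 : Real.sqrt (k+1)^2 = (k:ℝ)+1 := Real.sq_sqrt (by positivity)
  rw [div_le_iff₀ (by positivity)]
  have : 1 ≤ (c * (2 * Real.sqrt (k+1)))^2 := by
    rw [mul_pow, mul_pow, hs2]; nlinarith [sq_nonneg c]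
  nlinarith [mul_nonneg hc hs.le]

lemma bco_lower (k m : ℕ) (hm : (m+1)^2 ≤ k+1) :
    ((m:ℝ)+1) / (8 * ((k+1) * Real.sqrt (k+1))) ≤ bco k (m+1) := by
  have key : ∀ m : ℕ, (m+1)^2 ≤ k+1 →
     (bco k 1) * (1 - (m:ℝ)*(m+5)/(4*(k+2))) ≤ bco k (m+1) / (m+1) := by
    intro m
    induction m with
    | zero => intro _; simp
    | succ m ih =>
      intro hm
      have hm' : (m+1)^2 ≤ k+1 := le_trans (by gcongr; omega) hm
      have ih := ih hm'
      have hr : bco k (m+1+1) / ((m+1:ℕ)+1) = bco k (m+1) / (m+1) * (1 - ((m:ℝ)+3)/(2*(k+m+2))) := by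
        rw [bco_formula, bco_formula]
        have e1 : 2*k+(m+1) = 2*k+m+1 := by ring
        have e2 : k+(m+1)+1 = k+m+1+1 := by ring
        have e3 : 2*k+(m+1)+1 = 2*k+m+1+1 := by ring
        have e4 : (2:ℝ)^(2*k+m+1+1) = 2 * 2^(2*k+m+1) := by ring
        rw [e3, e1, e2, e4, Nat.factorial_succ (2*k+m), Nat.factorial_succ (k+m+1)]
        push_cast
        field_simp
        ring
      rw [hr]
      have hk : (0:ℝ) ≤ k := by positivity
      have hmk : ((m:ℝ)+1+1)^2 ≤ k+1 := by exact_mod_cast hm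
      have hm0 : (0:ℝ) ≤ m := by positivity
      have hx : ((m:ℝ)+3)/(2*(k+m+2)) ≤ (2*m+6)/(4*(k+2)) := by
        rw [div_le_div_iff₀ (by positivity) (by positivity)]
        nlinarith [mul_nonneg hm0 hk, mul_nonneg hm0 hm0]
      have hx0 : 0 ≤ ((m:ℝ)+3)/(2*(k+m+2)) := by positivity
      have hx1 : (2*(m:ℝ)+6)/(4*(k+2)) ≤ 1 := by
        rw [div_le_one (by positivity)]; nlinarith
      have hb := bco_nonneg k 1
      have hy0 : 0 ≤ (m:ℝ)*(m+5)/(4*(k+2)) := by positivity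
      calc bco k 1 * (1 - ((m+1:ℕ):ℝ)*((m+1:ℕ)+5)/(4*(k+2)))
          = bco k 1 * (1 - (m:ℝ)*(m+5)/(4*(k+2)) - (2*m+6)/(4*(k+2))) := by
            push_cast; field_simp; ring
        _ ≤ bco k 1 * ((1 - (m:ℝ)*(m+5)/(4*(k+2))) * (1 - (2*m+6)/(4*(k+2)))) := by
            apply mul_le_mul_of_nonneg_left _ hb
            have : 0 ≤ (2*(m:ℝ)+6)/(4*(k+2)) := by positivity
            nlinarith [mul_nonneg hy0 this]
        _ = (bco k 1 * (1 - (m:ℝ)*(m+5)/(4*(k+2)))) * (1 - (2*m+6)/(4*(k+2))) := by ring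
        _ ≤ (bco k (m+1) / (m+1)) * (1 - (2*m+6)/(4*(k+2))) := by
            apply mul_le_mul_of_nonneg_right ih; linarith
        _ ≤ _ := by
            apply mul_le_mul_of_nonneg_left
            · linarith
            · exact div_nonneg (bco_nonneg _ _) (by positivity)
  have h := key m hm
  have hmk : ((m:ℝ)+1)^2 ≤ k+1 := by exact_mod_cast hm
  have hk : (0:ℝ) ≤ k := by positivity
  have hm0 : (0:ℝ) ≤ m := by positivity
  have h2 : (m:ℝ)*(m+5)/(4*(k+2)) ≤ 1/2 := by
    rw [div_le_iff₀ (by positivity)]; nlinarith [sq_nonneg ((m:ℝ)-1)]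
  have h3 := cb_lower k
  have hb := bco_nonneg k 1
  have h4 : bco k 1 * (1/2) ≤ bco k (m+1) / (m+1) :=
    le_trans (mul_le_mul_of_nonneg_left (by linarith) hb) h
  have h5 : 1 / (4 * ((k+1) * Real.sqrt (k+1))) ≤ bco k 1 := by
    rw [bco_one_eq, le_div_iff₀ (by positivity)]
    refine le_trans (le_of_eq ?_) h3
    field_simp; norm_num
  rw [le_div_iff₀ (by positivity)] at h4
  refine le_trans ?_ h4
  calc ((m:ℝ)+1) / (8 * ((k+1) * Real.sqrt (k+1))) = 1 / (4 * ((k+1) * Real.sqrt (k+1))) * (1/2) * (m+1) := by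
        field_simp; norm_num
    _ ≤ _ := by gcongr

lemma bco_sum_lower_aux (i j n : ℕ) (hij : i ≤ j) (hj : j < n) :
    1 / (1536 * (n * Real.sqrt n)) ≤ ∑ m ∈ Finset.range (Nat.sqrt n + 1), bco i m * bco j m := by
  set q := Nat.sqrt (i+1) with hq
  have hqn : q ≤ Nat.sqrt n := Nat.sqrt_le_sqrt (by omega)
  have hqq : q^2 ≤ i+1 := Nat.sqrt_le' _
  have hq2 : Real.sqrt ((i:ℝ)+1) ≤ 2 * q := by
    have h1 : i+1 < (q+1)^2 := Nat.lt_succ_sqrt' _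
    have h1' : (i:ℝ)+1 < ((q:ℝ)+1)^2 := by exact_mod_cast h1
    have hq1 : 1 ≤ q := Nat.sqrt_pos.mpr (by omega)
    have hq1' : (1:ℝ) ≤ q := by exact_mod_cast hq1
    rw [Real.sqrt_le_left (by positivity)]
    nlinarith
  have hsum : ∀ q : ℕ, (q:ℝ)^3/3 ≤ ∑ m ∈ Finset.range q, ((m:ℝ)+1)^2 := by
    intro q
    induction q with
    | zero => simp
    | succ q ih =>
      rw [Finset.sum_range_succ]; push_cast
      have : (0:ℝ) ≤ q := by positivity
      nlinarith
  set si := Real.sqrt ((i:ℝ)+1) with hsi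
  set sj := Real.sqrt ((j:ℝ)+1) with hsj
  have hsi0 : 0 < si := by positivity
  have hsj0 : 0 < sj := by positivity
  have hsi2 : si^2 = (i:ℝ)+1 := Real.sq_sqrt (by positivity)
  have hjn : ((j:ℝ)+1) ≤ n := by exact_mod_cast hj
  have hn0 : (0:ℝ) < n := by linarith [show (0:ℝ) ≤ j by positivity]
  have hsjn : sj ≤ Real.sqrt n := Real.sqrt_le_sqrt hjn
  have step : ∑ m ∈ Finset.range q, bco i (m+1) * bco j (m+1) ≤ ∑ m ∈ Finset.range (Nat.sqrt n + 1), bco i m * bco j m := by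
    rw [Finset.sum_range_succ']
    have : ∑ m ∈ Finset.range q, bco i (m+1) * bco j (m+1) ≤ ∑ m ∈ Finset.range (Nat.sqrt n), bco i (m+1) * bco j (m+1) :=
      Finset.sum_le_sum_of_subset_of_nonneg (by simpa using hqn)
        (fun _ _ _ => mul_nonneg (bco_nonneg _ _) (bco_nonneg _ _))
    have := mul_nonneg (bco_nonneg i 0) (bco_nonneg j 0)
    linarith
  refine le_trans ?_ step
  have step2 : ∑ m ∈ Finset.range q, ((m:ℝ)+1)^2 * (1 / (8 * ((i+1) * si)) * (1 / (8 * ((j+1) * sj)))) ≤ ∑ m ∈ Finset.range q, bco i (m+1) * bco j (m+1) := by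
    refine Finset.sum_le_sum fun m hm => ?_
    have hm' : m + 1 ≤ q := by simpa using hm
    have hm2 : (m+1)^2 ≤ i+1 := le_trans (by gcongr) hqq
    have a := bco_lower i m hm2
    have b := bco_lower j m (by omega)
    calc _ = (((m:ℝ)+1) / (8 * ((i+1) * si))) * (((m:ℝ)+1) / (8 * ((j+1) * sj))) := by ring
      _ ≤ _ := mul_le_mul a b (by positivity) (bco_nonneg _ _)
  refine le_trans ?_ step2
  rw [← Finset.sum_mul]
  have h8 : si^3 / 24 ≤ ∑ m ∈ Finset.range q, ((m:ℝ)+1)^2 := by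
    refine le_trans ?_ (hsum q)
    have : si^3 ≤ (2*q)^3 := by gcongr
    nlinarith
  calc 1 / (1536 * (n * Real.sqrt n)) ≤ 1 / (1536 * ((j+1) * sj)) := by gcongr
    _ = si^3/24 * (1 / (8 * ((i+1) * si)) * (1 / (8 * ((j+1) * sj)))) := by
        rw [← hsi2]; field_simp; norm_num
    _ ≤ _ := by gcongr

lemma bco_sum_lower (i j n : ℕ) (hi : i < n) (hj : j < n) :
    1 / (1536 * (n * Real.sqrt n)) ≤ ∑ m ∈ Finset.range (Nat.sqrt n + 1), bco i m * bco j m := by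
  rcases le_total i j with h | h
  · exact bco_sum_lower_aux i j n h hj
  · simpa only [mul_comm] using bco_sum_lower_aux j i n h hi

structure PCone {A : Type*} [CommRing A] [Algebra ℝ A] (P : A → Prop) : Prop where
  one : P 1
  add : ∀ a b, P a → P b → P (a + b)
  mul : ∀ a b, P a → P b → P (a * b)
  smul : ∀ (c : ℝ) a, 0 ≤ c → P a → P (c • a)

section brunel
variable {A : Type*} [CommRing A] [Algebra ℝ A] {P : A → Prop}

lemma PCone.zero (h : PCone P) : P 0 := by
  simpa using h.smul 0 1 le_rfl h.one

lemma PCone.sum (h : PCone P) {ι : Type*} (s : Finset ι) (f : ι → A) (hf : ∀ i ∈ s, P (f i)) :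
    P (∑ i ∈ s, f i) :=
  Finset.sum_induction f P h.add h.zero hf

lemma PCone.pow (h : PCone P) {a : A} (ha : P a) (k : ℕ) : P (a ^ k) := by
  induction k with
  | zero => simpa using h.one
  | succ k ih => rw [pow_succ]; exact h.mul _ _ ih ha

lemma PCone.trans (h : PCone P) {a b c : A} (h1 : P (b - a)) (h2 : P (c - b)) : P (c - a) := by
  have := h.add _ _ h2 h1
  rwa [sub_add_sub_cancel] at this

lemma PCone.mul_le (h : PCone P) {a b c d : A} (h1 : P (b - a)) (h2 : P (d - c)) (ha : P a) (hd : P d) :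
    P (b * d - a * c) := by
  have := h.add _ _ (h.mul _ _ h1 hd) (h.mul _ _ ha h2)
  convert this using 1
  ring

lemma PCone.sum_le (h : PCone P) {ι : Type*} (s : Finset ι) (f g : ι → A) (hf : ∀ i ∈ s, P (g i - f i)) :
    P (∑ i ∈ s, g i - ∑ i ∈ s, f i) := by
  rw [← Finset.sum_sub_distrib]; exact h.sum s _ hf

lemma PCone.prod_le (h : PCone P) {ι : Type*} (s : Finset ι) (f g : ι → A)
    (hf : ∀ i ∈ s, P (f i)) (hg : ∀ i ∈ s, P (g i - f i)) :
    P (∏ i ∈ s, g i - ∏ i ∈ s, f i) ∧ P (∏ i ∈ s, f i) ∧ P (∏ i ∈ s, g i) := by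
  classical
  induction s using Finset.induction_on with
  | empty => simp [h.zero, h.one]
  | insert i s hi ih =>
    simp only [Finset.prod_insert hi]
    obtain ⟨i1, i2, i3⟩ := ih (fun j hj => hf j (by simp [hj])) (fun j hj => hg j (by simp [hj]))
    have hfi := hf i (by simp)
    have hgi := hg i (by simp)
    have hgi' : P (g i) := by
      have := h.add _ _ hgi hfi
      rwa [sub_add_cancel] at this
    exact ⟨h.mul_le hgi i1 hfi i3, h.mul _ _ hfi i2, h.mul _ _ hgi' i3⟩

noncomputable def aavg (n : ℕ) (a : A) : A := (n:ℝ)⁻¹ • ∑ k ∈ Finset.range n, a ^ k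

noncomputable def apsi (M : ℕ) (a : A) : A := ∑ k ∈ Finset.range M, bco k 1 • a ^ k

lemma PCone.aavg (h : PCone P) {a : A} (ha : P a) (n : ℕ) : P (aavg n a) :=
  h.smul _ _ (by positivity) (h.sum _ _ fun k _ => h.pow ha k)

lemma PCone.apsi (h : PCone P) {a : A} (ha : P a) (n : ℕ) : P (apsi n a) :=
  h.sum _ _ fun k _ => h.smul _ _ (bco_nonneg _ _) (h.pow ha k)

lemma trunc_pow_coeff_nonneg (M m k : ℕ) : 0 ≤ ((PowerSeries.trunc M bpsi) ^ m).coeff k := by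
  induction m generalizing k with
  | zero => simp only [pow_zero, Polynomial.coeff_one]; split_ifs <;> norm_num
  | succ m ih =>
    rw [pow_succ, Polynomial.coeff_mul]
    refine Finset.sum_nonneg fun x _ => mul_nonneg (ih _) ?_
    rw [PowerSeries.coeff_trunc]
    split_ifs
    · simpa [bco] using bco_nonneg x.2 1
    · exact le_rfl

lemma trunc_pow_coeff (M m k : ℕ) (hk : k < M) : ((PowerSeries.trunc M bpsi) ^ m).coeff k = bco k m := by
  have h := PowerSeries.trunc_trunc_pow bpsi M m
  have := congrArg (fun p => p.coeff k) h
  simp only [PowerSeries.coeff_trunc, if_pos hk] at this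
  rw [bco, ← this, ← Polynomial.coe_pow, Polynomial.coeff_coe]

lemma PCone.apsi_pow (h : PCone P) {a : A} (ha : P a) (M n m : ℕ) (hn : n ≤ M) :
    P ((_root_.apsi M a) ^ m - ∑ k ∈ Finset.range n, bco k m • a ^ k) := by
  have h1 : _root_.apsi M a = Polynomial.aeval a (PowerSeries.trunc M bpsi) := by
    rw [Polynomial.aeval_def, PowerSeries.eval₂_trunc_eq_sum_range, _root_.apsi]
    refine Finset.sum_congr rfl fun k _ => ?_
    simp [bco, Algebra.smul_def]
  rw [h1, ← map_pow]
  set p := (PowerSeries.trunc M bpsi) ^ m with hp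
  rw [Polynomial.aeval_eq_sum_range' (n := n + (p.natDegree + 1)) (by omega), Finset.sum_range_add]
  have : ∑ k ∈ Finset.range n, bco k m • a ^ k = ∑ k ∈ Finset.range n, p.coeff k • a ^ k := by
    refine Finset.sum_congr rfl fun k hk => ?_
    rw [hp, trunc_pow_coeff _ _ _ (lt_of_lt_of_le (Finset.mem_range.mp hk) hn)]
  rw [this, add_sub_cancel_left]
  exact h.sum _ _ fun k _ => h.smul _ _ (trunc_pow_coeff_nonneg _ _ _) (h.pow ha _)

lemma PCone.brunel (h : PCone P) {a b : A} (ha : P a) (hb : P b) (M n : ℕ) (hn : 1 ≤ n) (hnM : n ≤ M) :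
    P ((3072:ℝ) • _root_.aavg (Nat.sqrt n + 1) (_root_.apsi M a * _root_.apsi M b) - _root_.aavg n a * _root_.aavg n b) := by
  set N := Nat.sqrt n + 1 with hN
  set c : ℝ := 1 / (1536 * (n * Real.sqrt n)) with hc
  have hn0 : (0:ℝ) < n := by exact_mod_cast hn
  have hs0 : 0 < Real.sqrt n := Real.sqrt_pos.mpr hn0
  have hs2 : Real.sqrt n ^ 2 = n := Real.sq_sqrt hn0.le
  have hs1 : 1 ≤ Real.sqrt n := Real.one_le_sqrt.mpr (by exact_mod_cast hn)
  -- step 1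
  have s1 : P (∑ m ∈ Finset.range N, (_root_.apsi M a * _root_.apsi M b) ^ m
      - ∑ m ∈ Finset.range N, (∑ i ∈ Finset.range n, bco i m • a ^ i) * (∑ j ∈ Finset.range n, bco j m • b ^ j)) := by
    refine h.sum_le _ _ _ fun m _ => ?_
    rw [mul_pow]
    refine h.mul_le (h.apsi_pow ha M n m hnM) (h.apsi_pow hb M n m hnM) ?_ (h.pow (h.apsi hb M) m)
    exact h.sum _ _ fun k _ => h.smul _ _ (bco_nonneg _ _) (h.pow ha k)
  have e2 : ∑ m ∈ Finset.range N, (∑ i ∈ Finset.range n, bco i m • a ^ i) * (∑ j ∈ Finset.range n, bco j m • b ^ j)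
      = ∑ i ∈ Finset.range n, ∑ j ∈ Finset.range n, (∑ m ∈ Finset.range N, bco i m * bco j m) • (a ^ i * b ^ j) := by
    simp_rw [Finset.sum_mul_sum, Finset.sum_smul, smul_mul_smul_comm]
    rw [Finset.sum_comm]
    refine Finset.sum_congr rfl fun i _ => ?_
    rw [Finset.sum_comm]
  have e3 : c • ((∑ i ∈ Finset.range n, a ^ i) * (∑ j ∈ Finset.range n, b ^ j))
      = ∑ i ∈ Finset.range n, ∑ j ∈ Finset.range n, c • (a ^ i * b ^ j) := by
    simp_rw [Finset.sum_mul_sum, Finset.smul_sum]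
  have s2 : P (∑ m ∈ Finset.range N, (_root_.apsi M a * _root_.apsi M b) ^ m
      - c • ((∑ i ∈ Finset.range n, a ^ i) * (∑ j ∈ Finset.range n, b ^ j))) := by
    refine h.trans ?_ s1
    rw [e2, e3]
    refine h.sum_le _ _ _ fun i hi => h.sum_le _ _ _ fun j hj => ?_
    rw [← sub_smul]
    refine h.smul _ _ ?_ (h.mul _ _ (h.pow ha _) (h.pow hb _))
    have := bco_sum_lower i j n (Finset.mem_range.mp hi) (Finset.mem_range.mp hj)
    rw [hc]; linarith
  set X := ∑ m ∈ Finset.range N, (_root_.apsi M a * _root_.apsi M b) ^ m with hX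
  have hXP : P X := h.sum _ _ fun k _ => h.pow (h.mul _ _ (h.apsi ha M) (h.apsi hb M)) k
  have hNn : (N:ℝ) ≤ 2 * Real.sqrt n := by
    have h1 : ((Nat.sqrt n : ℕ):ℝ) ≤ Real.sqrt n := Real.nat_sqrt_le_real_sqrt
    rw [hN]; push_cast; linarith
  have hN0 : (0:ℝ) < N := by rw [hN]; positivity
  have e4 : (3072:ℝ) • _root_.aavg N (_root_.apsi M a * _root_.apsi M b) - _root_.aavg n a * _root_.aavg n b
     = ((n:ℝ)⁻¹ * (n:ℝ)⁻¹ * c⁻¹) • (X - c • ((∑ i ∈ Finset.range n, a ^ i) * (∑ j ∈ Finset.range n, b ^ j)))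
       + (3072 * (N:ℝ)⁻¹ - (n:ℝ)⁻¹ * (n:ℝ)⁻¹ * c⁻¹) • X := by
    have hc0 : c ≠ 0 := by rw [hc]; positivity
    have e5 : (n:ℝ)⁻¹ * (n:ℝ)⁻¹ * c⁻¹ * c = (n:ℝ)⁻¹ * (n:ℝ)⁻¹ := by field_simp
    simp only [_root_.aavg]
    rw [smul_mul_smul_comm, smul_sub, sub_smul, smul_smul, smul_smul, e5]
    abel
  rw [e4]
  refine h.add _ _ (h.smul _ _ (by rw [hc]; positivity) s2) (h.smul _ _ ?_ hXP)
  rw [hc, sub_nonneg]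
  have : (n:ℝ)⁻¹ * (n:ℝ)⁻¹ * (1 / (1536 * (n * Real.sqrt n)))⁻¹ = 1536 * (Real.sqrt n)⁻¹ := by
    generalize Real.sqrt n = s at *
    rw [← hs2]
    field_simp
  rw [this, ← div_eq_mul_inv, ← div_eq_mul_inv, div_le_div_iff₀ hs0 hN0]
  nlinarith

lemma brunel_iter (h : PCone P) (Q : A → Prop) (hQP : ∀ a, Q a → P a)
    (hQ : ∀ M a b, Q a → Q b → Q (apsi M a * apsi M b)) (r : ℕ) :
    ∃ C : ℝ, 0 ≤ C ∧ ∃ s : ℕ → ℕ, (∀ n, 1 ≤ n → 1 ≤ s n) ∧ ∀ L : List A, L.length = 2^r →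
      (∀ a ∈ L, Q a) → ∀ M, ∃ U, Q U ∧ ∀ n, 1 ≤ n → n ≤ M →
        P (C • aavg (s n) U - (L.map (aavg n)).prod) := by
  induction r with
  | zero =>
    refine ⟨1, zero_le_one, id, fun n hn => hn, fun L hL hLQ M => ?_⟩
    obtain ⟨a, rfl⟩ := List.length_eq_one_iff.mp (by simpa using hL)
    refine ⟨a, hLQ a (by simp), fun n _ _ => ?_⟩
    simpa using h.zero
  | succ r ih =>
    obtain ⟨C, hC, s, hs, ih⟩ := ih
    refine ⟨C * C * 3072, by positivity, fun n => Nat.sqrt (s n) + 1, fun n _ => Nat.le_add_left _ _, fun L hL hLQ M => ?_⟩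
    have hl : (2:ℕ)^(r+1) = 2^r + 2^r := by ring
    obtain ⟨U1, hU1, h1⟩ := ih (L.take (2^r)) (by simp [hL, hl]) (fun a ha => hLQ a (List.mem_of_mem_take ha)) M
    obtain ⟨U2, hU2, h2⟩ := ih (L.drop (2^r)) (by simp [hL, hl]) (fun a ha => hLQ a (List.mem_of_mem_drop ha)) M
    set M' := (Finset.range (M+1)).sup s
    refine ⟨_, hQ M' U1 U2 hU1 hU2, fun n hn hnM => ?_⟩
    have hsM : s n ≤ M' := Finset.le_sup (f := s) (by simp; omega)
    have hb := h.brunel (hQP _ hU1) (hQP _ hU2) M' (s n) (hs n hn) hsM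
    have hb' := h.smul (C*C) _ (by positivity) hb
    have hp : P ((L.take (2^r)).map (aavg n)).prod := by
      refine List.prod_induction P h.mul h.one ?_
      intro x hx
      obtain ⟨a, ha, rfl⟩ := List.mem_map.mp hx
      exact h.aavg (hQP _ (hLQ a (List.mem_of_mem_take ha))) n
    have hm := h.mul_le (h1 n hn hnM) (h2 n hn hnM) hp (h.smul _ _ hC (h.aavg (hQP _ hU2) (s n)))
    rw [← List.prod_append, ← List.map_append, List.take_append_drop] at hm
    refine h.trans hm ?_
    convert hb' using 1
    rw [smul_sub, smul_smul, smul_mul_smul_comm]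

lemma aavg_one (n : ℕ) (hn : 1 ≤ n) : aavg n (1 : A) = 1 := by
  have : (n:ℝ) ≠ 0 := by positivity
  simp only [aavg, one_pow, Finset.sum_const, Finset.card_range]
  rw [← Nat.cast_smul_eq_nsmul ℝ, smul_smul, inv_mul_cancel₀ this, one_smul]

lemma brunel_fin (h : PCone P) (Q : A → Prop) (hQP : ∀ a, Q a → P a) (hQ1 : Q 1)
    (hQ : ∀ M a b, Q a → Q b → Q (apsi M a * apsi M b)) {d : ℕ} (t : Fin d → A) (ht : ∀ i, Q (t i)) :
    ∃ C : ℝ, 0 ≤ C ∧ ∃ s : ℕ → ℕ, (∀ n, 1 ≤ n → 1 ≤ s n) ∧ ∀ M, ∃ U, Q U ∧ ∀ n, 1 ≤ n → n ≤ M →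
        P (C • aavg (s n) U - ∏ i, aavg n (t i)) := by
  obtain ⟨C, hC, s, hs, H⟩ := brunel_iter h Q hQP hQ d
  refine ⟨C, hC, s, hs, fun M => ?_⟩
  have hd : d ≤ 2^d := Nat.lt_two_pow_self.le
  obtain ⟨U, hU, hU'⟩ := H (List.ofFn t ++ List.replicate (2^d - d) 1) (by simp; omega) (by
    intro a ha
    rcases List.mem_append.mp ha with ha | ha
    · obtain ⟨i, rfl⟩ := (List.mem_ofFn' _ _).mp ha
      exact ht i
    · rw [List.eq_of_mem_replicate ha]; exact hQ1) M
  refine ⟨U, hU, fun n hn hnM => ?_⟩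
  have := hU' n hn hnM
  rw [List.map_append, List.prod_append, List.map_replicate, aavg_one n hn, List.prod_replicate, one_pow,
    mul_one, List.map_ofFn, List.prod_ofFn] at this
  exact this

end brunel

section wspace
variable {μ : Measure Ω}

instance instAEOrd : IsOrderedAddMonoid (Ω →ₘ[μ] ℝ) where
  add_le_add_left f g h k := by
    rw [← AEEqFun.coeFn_le] at h ⊢
    filter_upwards [h, AEEqFun.coeFn_add f k, AEEqFun.coeFn_add g k] with x h1 h2 h3
    rw [h2, h3]; simpa using h1

/-- truncated excess integral -/
noncomputable def exc (C : ℝ) (f : Ω →ₘ[μ] ℝ) : ℝ≥0∞ := ∫⁻ x, ENNReal.ofReal (|f x| - C) ∂μ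

noncomputable def trn (C : ℝ) (f : Ω →ₘ[μ] ℝ) : Ω →ₘ[μ] ℝ :=
  AEEqFun.comp (fun x : ℝ => max (-C) (min C x)) (by fun_prop) f

lemma trn_ae (C : ℝ) (f : Ω →ₘ[μ] ℝ) : ∀ᵐ x ∂μ, trn C f x = max (-C) (min C (f x)) :=
  AEEqFun.coeFn_comp _ _ _

lemma trn_le (C : ℝ) (hC : 0 ≤ C) (f : Ω →ₘ[μ] ℝ) : ∀ᵐ x ∂μ, |trn C f x| ≤ C := by
  filter_upwards [trn_ae C f] with x hx
  rw [hx, abs_le]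
  exact ⟨le_max_left _ _, max_le (by linarith) (min_le_left _ _)⟩

lemma sub_trn_ae (C : ℝ) (hC : 0 ≤ C) (f : Ω →ₘ[μ] ℝ) :
    ∀ᵐ x ∂μ, |(f - trn C f) x| = max (|f x| - C) 0 := by
  filter_upwards [trn_ae C f, AEEqFun.coeFn_sub f (trn C f)] with x h1 h2
  rw [h2, Pi.sub_apply, h1]
  rcases le_total (f x) C with h | h
  · rw [min_eq_right h]
    rcases le_total (-C) (f x) with h' | h'
    · rw [max_eq_right h', sub_self, abs_zero, max_eq_right]
      have := abs_le.mpr ⟨h', h⟩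
      linarith
    · rw [max_eq_left h', abs_of_nonpos (by linarith), abs_of_nonpos (by linarith), max_eq_left (by linarith)]
      ring
  · rw [min_eq_left h, max_eq_right (by linarith), abs_of_nonneg (by linarith), abs_of_nonneg (by linarith), max_eq_left (by linarith)]

lemma eLpNorm_sub_trn (C : ℝ) (hC : 0 ≤ C) (f : Ω →ₘ[μ] ℝ) :
    eLpNorm (f - trn C f : Ω →ₘ[μ] ℝ) 1 μ = exc C f := by
  rw [eLpNorm_one_eq_lintegral_enorm, exc]
  refine lintegral_congr_ae ?_
  filter_upwards [sub_trn_ae C hC f] with x hx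
  rw [← ofReal_norm, Real.norm_eq_abs, hx, ENNReal.ofReal_max]
  simp

lemma eLpNorm_top_le {g : Ω → ℝ} {C : ℝ} (h : ∀ᵐ x ∂μ, |g x| ≤ C) : eLpNorm g ⊤ μ ≤ ENNReal.ofReal C := by
  rw [eLpNorm_exponent_top]
  refine eLpNormEssSup_le_of_ae_bound ?_
  simpa using h

lemma memW_iff (f : Ω →ₘ[μ] ℝ) : MemL1pLinf μ f ↔ ∃ C : ℝ, 0 ≤ C ∧ exc C f ≠ ∞ := by
  constructor
  · rintro ⟨g, h, hg, hh, rfl⟩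
    refine ⟨(eLpNorm h ⊤ μ).toReal, ENNReal.toReal_nonneg, ?_⟩
    have hle : exc (eLpNorm h ⊤ μ).toReal (g + h) ≤ eLpNorm g 1 μ := by
      rw [eLpNorm_one_eq_lintegral_enorm, exc]
      refine lintegral_mono_ae ?_
      have hb : ∀ᵐ x ∂μ, ‖h x‖ₑ ≤ eLpNorm h ⊤ μ := by
        rw [eLpNorm_exponent_top]; exact enorm_ae_le_eLpNormEssSup _ _
      filter_upwards [AEEqFun.coeFn_add g h, hb] with x h1 h2
      rw [← ofReal_norm, Real.norm_eq_abs]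
      apply ENNReal.ofReal_le_ofReal
      rw [h1, Pi.add_apply]
      have : |h x| ≤ (eLpNorm h ⊤ μ).toReal := by
        have := ENNReal.toReal_mono hh h2
        simpa using this
      linarith [abs_add_le (g x) (h x)]
    exact ne_top_of_le_ne_top hg hle
  · rintro ⟨C, hC, h⟩
    refine ⟨f - trn C f, trn C f, ?_, ?_, by simp⟩
    · rwa [eLpNorm_sub_trn C hC]
    · exact ne_top_of_le_ne_top ENNReal.ofReal_ne_top (eLpNorm_top_le (trn_le C hC f))

lemma memW_solid {f g : Ω →ₘ[μ] ℝ} (hg : MemL1pLinf μ g) (h : ∀ᵐ x ∂μ, |f x| ≤ |g x|) : MemL1pLinf μ f := by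
  rw [memW_iff] at hg ⊢
  obtain ⟨C, hC, hg⟩ := hg
  refine ⟨C, hC, ne_top_of_le_ne_top hg (lintegral_mono_ae ?_)⟩
  filter_upwards [h] with x hx
  exact ENNReal.ofReal_le_ofReal (by linarith)

variable (μ) in
def WS : Submodule ℝ (Ω →ₘ[μ] ℝ) where
  carrier := {f | MemL1pLinf μ f}
  zero_mem' := (memW_iff 0).mpr ⟨0, le_rfl, by
    have : exc 0 (0 : Ω →ₘ[μ] ℝ) = 0 := by
      rw [exc, lintegral_eq_zero_iff' (by fun_prop)]
      filter_upwards [AEEqFun.coeFn_zero (α := Ω) (μ := μ) (β := ℝ)] with x hx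
      simp [hx]
    simp [this]⟩
  add_mem' := by
    rintro f f' ⟨g, h, hg, hh, rfl⟩ ⟨g', h', hg', hh', rfl⟩
    refine ⟨g + g', h + h', ?_, ?_, by abel⟩
    · rw [eLpNorm_congr_ae (AEEqFun.coeFn_add _ _)]
      exact ne_top_of_le_ne_top (ENNReal.add_ne_top.mpr ⟨hg, hg'⟩) (eLpNorm_add_le g.aestronglyMeasurable g'.aestronglyMeasurable le_rfl)
    · rw [eLpNorm_congr_ae (AEEqFun.coeFn_add _ _)]
      exact ne_top_of_le_ne_top (ENNReal.add_ne_top.mpr ⟨hh, hh'⟩) (eLpNorm_add_le h.aestronglyMeasurable h'.aestronglyMeasurable le_top)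
  smul_mem' := by
    rintro c f ⟨g, h, hg, hh, rfl⟩
    refine ⟨c • g, c • h, ?_, ?_, by rw [smul_add]⟩
    · rw [eLpNorm_congr_ae (AEEqFun.coeFn_smul _ _)]
      exact ne_top_of_le_ne_top (ENNReal.mul_ne_top (by simp) hg) eLpNorm_const_smul_le
    · rw [eLpNorm_congr_ae (AEEqFun.coeFn_smul _ _)]
      exact ne_top_of_le_ne_top (ENNReal.mul_ne_top (by simp) hh) eLpNorm_const_smul_le

lemma mem_WS {f : Ω →ₘ[μ] ℝ} : f ∈ WS μ ↔ MemL1pLinf μ f := Iff.rfl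

/-- evaluation -/
noncomputable def ev (f : WS μ) : Ω → ℝ := ⇑(f : Ω →ₘ[μ] ℝ)

lemma ev_meas (f : WS μ) : Measurable (ev f) := AEEqFun.measurable _

lemma ev_add (f g : WS μ) : ∀ᵐ x ∂μ, ev (f + g) x = ev f x + ev g x := AEEqFun.coeFn_add _ _
lemma ev_sub (f g : WS μ) : ∀ᵐ x ∂μ, ev (f - g) x = ev f x - ev g x := AEEqFun.coeFn_sub _ _
lemma ev_smul (c : ℝ) (f : WS μ) : ∀ᵐ x ∂μ, ev (c • f) x = c * ev f x := AEEqFun.coeFn_smul _ _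
lemma ev_zero : ∀ᵐ x ∂μ, ev (0 : WS μ) x = 0 := AEEqFun.coeFn_zero
lemma ev_le {f g : WS μ} : f ≤ g ↔ ∀ᵐ x ∂μ, ev f x ≤ ev g x := AEEqFun.coeFn_le.symm
lemma ev_nonneg {f : WS μ} : 0 ≤ f ↔ ∀ᵐ x ∂μ, 0 ≤ ev f x := by
  rw [ev_le]
  constructor <;> intro h <;> filter_upwards [h, ev_zero (μ := μ)] with x h1 h2
  · rwa [h2] at h1
  · rwa [h2]
lemma ev_ext {f g : WS μ} (h : ∀ᵐ x ∂μ, ev f x = ev g x) : f = g := Subtype.ext (AEEqFun.ext h)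

instance instWOrd : IsOrderedAddMonoid (WS μ) where
  add_le_add_left _ _ h _ := add_le_add_left (α := Ω →ₘ[μ] ℝ) h _

lemma w_smul_nonneg {c : ℝ} {f : WS μ} (hc : 0 ≤ c) (hf : 0 ≤ f) : 0 ≤ c • f := by
  rw [ev_nonneg] at *
  filter_upwards [hf, ev_smul c f] with x h1 h2
  rw [h2]; positivity

lemma w_smul_le {c : ℝ} {f g : WS μ} (hc : 0 ≤ c) (hf : f ≤ g) : c • f ≤ c • g := by
  have := w_smul_nonneg hc (sub_nonneg.mpr hf)
  rwa [smul_sub, sub_nonneg] at this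

lemma w_smul_le' {c d : ℝ} {f : WS μ} (hc : c ≤ d) (hf : 0 ≤ f) : c • f ≤ d • f := by
  have := w_smul_nonneg (sub_nonneg.mpr hc) hf
  have e : (d - c) • f = d • f - c • f := _root_.sub_smul d c f
  rwa [e, sub_nonneg] at this

lemma memW_bdd {f : Ω →ₘ[μ] ℝ} {C : ℝ} (h : ∀ᵐ x ∂μ, |f x| ≤ C) : MemL1pLinf μ f := by
  rw [memW_iff]
  refine ⟨max C 0, le_max_right _ _, ?_⟩
  have : exc (max C 0) f = 0 := by
    rw [exc, lintegral_eq_zero_iff' (by fun_prop)]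
    filter_upwards [h] with x hx
    simp only [Pi.zero_apply, ENNReal.ofReal_eq_zero]
    linarith [le_max_left C 0]
  simp [this]

variable (μ) in
noncomputable def wone : WS μ := ⟨1, memW_bdd (C := 1) (by
  filter_upwards [AEEqFun.coeFn_one (α := Ω) (μ := μ) (β := ℝ)] with x hx
  simp [hx])⟩

lemma ev_one : ∀ᵐ x ∂μ, ev (wone μ) x = 1 := AEEqFun.coeFn_one

noncomputable def wabs (f : WS μ) : WS μ := ⟨|(f : Ω →ₘ[μ] ℝ)|, memW_solid f.2 (by
  filter_upwards [AEEqFun.coeFn_abs (f : Ω →ₘ[μ] ℝ)] with x hx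
  rw [hx, abs_abs])⟩

lemma ev_abs (f : WS μ) : ∀ᵐ x ∂μ, ev (wabs f) x = |ev f x| := AEEqFun.coeFn_abs _

noncomputable def wpos (f : WS μ) : WS μ := (2:ℝ)⁻¹ • (f + wabs f)

lemma ev_pos (f : WS μ) : ∀ᵐ x ∂μ, ev (wpos f) x = max (ev f x) 0 := by
  filter_upwards [ev_smul (2:ℝ)⁻¹ (f + wabs f), ev_add f (wabs f), ev_abs f] with x h1 h2 h3
  rw [wpos, h1, h2, h3]
  rcases le_total (ev f x) 0 with h | h
  · rw [max_eq_right h, abs_of_nonpos h]; ring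
  · rw [max_eq_left h, abs_of_nonneg h]; ring

/-- integral of positive part -/
noncomputable def wint (f : WS μ) : ℝ≥0∞ := ∫⁻ x, ENNReal.ofReal (ev f x) ∂μ

lemma wint_mono {f g : WS μ} (h : f ≤ g) : wint f ≤ wint g := by
  rw [ev_le] at h
  refine lintegral_mono_ae ?_
  filter_upwards [h] with x hx using ENNReal.ofReal_le_ofReal hx

lemma wint_zero : wint (0 : WS μ) = 0 := by
  rw [wint, lintegral_eq_zero_iff' (by have := ev_meas (0 : WS μ); fun_prop)]
  filter_upwards [ev_zero (μ := μ)] with x hx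
  simp [hx]

lemma wint_add_le (f g : WS μ) : wint (f + g) ≤ wint f + wint g := by
  have := ev_meas f
  rw [wint, wint, wint, ← lintegral_add_left (by fun_prop)]
  refine lintegral_mono_ae ?_
  filter_upwards [ev_add f g] with x hx
  rw [hx]; exact ENNReal.ofReal_add_le

lemma wint_smul {c : ℝ} (hc : 0 ≤ c) (f : WS μ) : wint (c • f) = ENNReal.ofReal c * wint f := by
  have := ev_meas f
  rw [wint, wint, ← lintegral_const_mul _ (by fun_prop)]
  refine lintegral_congr_ae ?_
  filter_upwards [ev_smul c f] with x hx
  rw [hx, ENNReal.ofReal_mul hc]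

lemma wint_sum_le {ι : Type*} (s : Finset ι) (f : ι → WS μ) : wint (∑ i ∈ s, f i) ≤ ∑ i ∈ s, wint (f i) := by
  classical
  induction s using Finset.induction_on with
  | empty => simp [wint_zero]
  | insert i s hi ih =>
    rw [Finset.sum_insert hi, Finset.sum_insert hi]
    exact (wint_add_le _ _).trans (by gcongr)

def IsPosOp (S : Module.End ℝ (WS μ)) : Prop := ∀ f, 0 ≤ f → 0 ≤ S f

structure PDS (S : Module.End ℝ (WS μ)) : Prop where
  pos : IsPosOp S
  int : ∀ f, 0 ≤ f → wint (S f) ≤ wint f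
  one : S (wone μ) ≤ wone μ

lemma IsPosOp.mono {S : Module.End ℝ (WS μ)} (h : IsPosOp S) {f g : WS μ} (hfg : f ≤ g) : S f ≤ S g := by
  have := h _ (sub_nonneg.mpr hfg)
  rwa [map_sub, sub_nonneg] at this

lemma wone_nonneg : 0 ≤ wone μ := by
  rw [ev_nonneg]; filter_upwards [ev_one (μ := μ)] with x hx; rw [hx]; norm_num

lemma PDS.id : PDS (1 : Module.End ℝ (WS μ)) := ⟨fun _ h => h, fun _ _ => le_rfl, le_rfl⟩

lemma PDS.mul {S S' : Module.End ℝ (WS μ)} (h : PDS S) (h' : PDS S') : PDS (S * S') :=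
  ⟨fun f hf => h.pos _ (h'.pos _ hf), fun f hf => (h.int _ (h'.pos _ hf)).trans (h'.int _ hf),
    (h.pos.mono h'.one).trans h.one⟩

lemma PDS.pow {S : Module.End ℝ (WS μ)} (h : PDS S) (k : ℕ) : PDS (S ^ k) := by
  induction k with
  | zero => simpa using PDS.id
  | succ k ih => rw [pow_succ]; exact ih.mul h

lemma PDS.comb {S : ℕ → Module.End ℝ (WS μ)} (h : ∀ k, PDS (S k)) (M : ℕ) (c : ℕ → ℝ) (hc : ∀ k, 0 ≤ c k)
    (hs : ∑ k ∈ Finset.range M, c k ≤ 1) : PDS (∑ k ∈ Finset.range M, c k • S k) := by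
  refine ⟨fun f hf => ?_, fun f hf => ?_, ?_⟩
  · simp only [LinearMap.sum_apply, LinearMap.smul_apply]
    exact Finset.sum_nonneg fun k _ => w_smul_nonneg (hc k) ((h k).pos f hf)
  · simp only [LinearMap.sum_apply, LinearMap.smul_apply]
    refine (wint_sum_le _ _).trans ?_
    calc ∑ k ∈ Finset.range M, wint (c k • (S k) f) ≤ ∑ k ∈ Finset.range M, ENNReal.ofReal (c k) * wint f := by
          refine Finset.sum_le_sum fun k _ => ?_
          rw [wint_smul (hc k)]
          gcongr
          exact (h k).int f hf
      _ = ENNReal.ofReal (∑ k ∈ Finset.range M, c k) * wint f := by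
          rw [← Finset.sum_mul, ENNReal.ofReal_sum_of_nonneg fun k _ => hc k]
      _ ≤ 1 * wint f := by
          gcongr
          exact ENNReal.ofReal_le_one.mpr hs
      _ = wint f := one_mul _
  · simp only [LinearMap.sum_apply, LinearMap.smul_apply]
    calc ∑ k ∈ Finset.range M, c k • (S k) (wone μ) ≤ ∑ k ∈ Finset.range M, c k • wone μ :=
          Finset.sum_le_sum fun k _ => w_smul_le (hc k) (h k).one
      _ = (∑ k ∈ Finset.range M, c k) • wone μ := by rw [Finset.sum_smul]
      _ ≤ (1:ℝ) • wone μ := w_smul_le' hs wone_nonneg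
      _ = _ := one_smul _ _

/-- Hopf's maximal inequality -/
lemma hopf {U : Module.End ℝ (WS μ)} (hU : PDS U) (f : WS μ) (hf : 0 ≤ f) (hfi : wint f ≠ ∞)
    (lam : ℝ) (hl : 0 < lam) (N : ℕ) :
    ∃ E : Set Ω, MeasurableSet E ∧ ENNReal.ofReal lam * μ E ≤ wint f ∧
      ∀ n, 1 ≤ n → n ≤ N → ∀ᵐ x ∂μ, x ∉ E → ev ((n:ℝ)⁻¹ • (∑ k ∈ Finset.range n, U ^ k) f) x ≤ lam := by
  set g : WS μ := f - lam • wone μ with hg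
  let h : ℕ → WS μ := fun n => Nat.rec 0 (fun _ u => wpos (g + U u)) n
  have h0 : h 0 = 0 := rfl
  have hs : ∀ n, h (n+1) = wpos (g + U (h n)) := fun n => rfl
  have hpos_mono : ∀ u v : WS μ, u ≤ v → wpos u ≤ wpos v := by
    intro u v huv
    rw [ev_le] at *
    filter_upwards [huv, ev_pos u, ev_pos v] with x h1 h2 h3
    rw [h2, h3]; exact max_le_max_right _ h1
  have hpos_ge : ∀ u : WS μ, u ≤ wpos u := by
    intro u; rw [ev_le]
    filter_upwards [ev_pos u] with x h1
    rw [h1]; exact le_max_left _ _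
  have hpos_nn : ∀ u : WS μ, 0 ≤ wpos u := by
    intro u; rw [ev_nonneg]
    filter_upwards [ev_pos u] with x h1
    rw [h1]; exact le_max_right _ _
  have hnn : ∀ n, 0 ≤ h n := by
    intro n; rcases n with _ | n
    · exact le_rfl
    · exact hpos_nn _
  have hmono1 : ∀ n, h n ≤ h (n+1) := by
    intro n
    induction n with
    | zero => exact hnn 1
    | succ n ih => rw [hs, hs (n+1)]; exact hpos_mono _ _ (add_le_add_right (hU.pos.mono ih) _)
  have hmono : Monotone h := monotone_nat_of_le_succ hmono1
  have hfin : ∀ n, wint (h n) ≠ ∞ := by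
    intro n
    induction n with
    | zero => rw [h0, wint_zero]; simp
    | succ n ih =>
      have h1 : h (n+1) ≤ f + U (h n) := by
        have a1 := ev_nonneg.mp hf
        have a2 := ev_nonneg.mp (hU.pos _ (hnn n))
        rw [hs, ev_le]
        filter_upwards [ev_pos (g + U (h n)), ev_add g (U (h n)), ev_add f (U (h n)), ev_sub f (lam • wone μ),
          ev_smul lam (wone μ), ev_one (μ := μ), a1, a2] with x b1 b2 b3 b4 b5 b6 b7 b8
        rw [b1, b2, b3, b4, b5, b6]
        apply max_le <;> linarith
      refine ne_top_of_le_ne_top ?_ ((wint_mono h1).trans (wint_add_le _ _))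
      exact ENNReal.add_ne_top.mpr ⟨hfi, ne_top_of_le_ne_top ih (hU.int _ (hnn n))⟩
  have hge : ∀ n, (∑ k ∈ Finset.range n, U ^ k) g ≤ h n := by
    intro n
    induction n with
    | zero => simp [h0]
    | succ n ih =>
      rw [hs]
      refine le_trans ?_ (hpos_ge _)
      have : (∑ k ∈ Finset.range (n+1), U ^ k) g = g + U ((∑ k ∈ Finset.range n, U ^ k) g) := by
        rw [Finset.sum_range_succ', ← Module.End.mul_apply, Finset.mul_sum]
        simp only [pow_succ', LinearMap.add_apply, pow_zero, Module.End.one_apply]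
        rw [add_comm]
      rw [this]
      exact add_le_add_right (hU.pos.mono ih) _
  set H := h (N+1) with hH
  refine ⟨{x | 0 < ev H x}, measurableSet_lt measurable_const (ev_meas H), ?_, ?_⟩
  · set E := {x | 0 < ev H x} with hE
    have hEm : MeasurableSet E := measurableSet_lt measurable_const (ev_meas H)
    have key : ∀ᵐ x ∂μ, ENNReal.ofReal (ev H x) + E.indicator (fun _ => ENNReal.ofReal lam) x
        ≤ ENNReal.ofReal (ev f x) + ENNReal.ofReal (ev (U H) x) := by
      have a0 : U (h N) ≤ U H := hU.pos.mono (hmono (Nat.le_succ N))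
      have a1 := ev_le.mp a0
      have a2 := ev_nonneg.mp hf
      have a3 := ev_nonneg.mp (hU.pos _ (hnn (N+1)))
      filter_upwards [ev_pos (g + U (h N)), ev_add g (U (h N)), ev_sub f (lam • wone μ),
          ev_smul lam (wone μ), ev_one (μ := μ), a1, a2, a3] with x b1 b2 b4 b5 b6 b7 b8 b9
      by_cases hx : x ∈ E
      · rw [Set.indicator_of_mem hx]
        have hx' : 0 < ev H x := hx
        have : ev H x = max (ev (g + U (h N)) x) 0 := b1
        have e : ev H x = ev (g + U (h N)) x := by
          rw [this] at hx' ⊢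
          rcases lt_max_iff.mp hx' with q | q
          · exact max_eq_left q.le
          · exact absurd q (lt_irrefl _)
        rw [← ENNReal.ofReal_add hx'.le hl.le, ← ENNReal.ofReal_add b8 b9]
        apply ENNReal.ofReal_le_ofReal
        rw [e, b2, b4, b5, b6]; linarith
      · rw [Set.indicator_of_notMem hx]
        have : ev H x ≤ 0 := not_lt.mp hx
        rw [ENNReal.ofReal_of_nonpos this]; simp
    have m1 := ev_meas H
    have m2 := ev_meas f
    have := lintegral_mono_ae key
    rw [lintegral_add_left (by fun_prop), lintegral_add_left (by fun_prop), lintegral_indicator_const hEm] at this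
    have h2 : wint H + ENNReal.ofReal lam * μ E ≤ wint f + wint H :=
      this.trans (add_le_add_right (hU.int _ (hnn (N+1))) _)
    rw [add_comm] at h2
    exact (ENNReal.add_le_add_iff_right (hfin (N+1))).mp h2
  · intro n hn hnN
    have a1 := ev_le.mp ((hge n).trans (hmono (show n ≤ N+1 by omega)))
    have a2 : (∑ k ∈ Finset.range n, U ^ k) (wone μ) ≤ (n:ℝ) • wone μ := by
      rw [LinearMap.sum_apply]
      refine (Finset.sum_le_sum fun k _ => (hU.pow k).one).trans (le_of_eq ?_)
      simp [Nat.cast_smul_eq_nsmul]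
    have a3 := ev_le.mp a2
    have e : (∑ k ∈ Finset.range n, U ^ k) g = (∑ k ∈ Finset.range n, U ^ k) f - lam • (∑ k ∈ Finset.range n, U ^ k) (wone μ) := by
      rw [hg, map_sub, map_smul]
    rw [e] at a1
    filter_upwards [a1, a3, ev_sub ((∑ k ∈ Finset.range n, U ^ k) f) (lam • (∑ k ∈ Finset.range n, U ^ k) (wone μ)),
      ev_smul lam ((∑ k ∈ Finset.range n, U ^ k) (wone μ)), ev_smul (n:ℝ) (wone μ), ev_one (μ := μ),
      ev_smul (n:ℝ)⁻¹ ((∑ k ∈ Finset.range n, U ^ k) f)] with x b1 b2 b3 b4 b5 b6 b7 hx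
    have hx' : ev H x ≤ 0 := not_lt.mp hx
    rw [b7]
    rw [b3, b4] at b1
    rw [b5, b6] at b2
    have hn0 : (0:ℝ) < n := by exact_mod_cast hn
    rw [inv_mul_le_iff₀ hn0]
    nlinarith

end wspace

section opers
variable {μ : Measure Ω}

lemma memW_one {g : Ω →ₘ[μ] ℝ} (h : eLpNorm g 1 μ ≠ ∞) : MemL1pLinf μ g :=
  ⟨g, 0, h, by rw [eLpNorm_congr_ae AEEqFun.coeFn_zero]; simp, by simp⟩

lemma memW_top {g : Ω →ₘ[μ] ℝ} (h : eLpNorm g ⊤ μ ≠ ∞) : MemL1pLinf μ g :=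
  ⟨0, g, by rw [eLpNorm_congr_ae AEEqFun.coeFn_zero]; simp, h, by simp⟩

lemma IsPosDS.memW {T : (Ω →ₘ[μ] ℝ) → (Ω →ₘ[μ] ℝ)} (hT : IsPosDS μ T) {f : Ω →ₘ[μ] ℝ}
    (hf : MemL1pLinf μ f) : MemL1pLinf μ (T f) := by
  obtain ⟨g, h, hg, hh, rfl⟩ := hf
  have hg' := memW_one hg
  have hh' := memW_top hh
  exact ⟨T g, T h, ne_top_of_le_ne_top hg (hT.norm_one g hg'), ne_top_of_le_ne_top hh (hT.norm_top h hh'),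
    hT.map_add _ _ hg' hh'⟩

noncomputable def IsPosDS.op {T : (Ω →ₘ[μ] ℝ) → (Ω →ₘ[μ] ℝ)} (hT : IsPosDS μ T) : Module.End ℝ (WS μ) where
  toFun f := ⟨T f, hT.memW f.2⟩
  map_add' f g := Subtype.ext (hT.map_add _ _ f.2 g.2)
  map_smul' c f := Subtype.ext (hT.map_smul _ _ f.2)

lemma wint_eq_eLpNorm {f : WS μ} (hf : 0 ≤ f) : wint f = eLpNorm (f : Ω →ₘ[μ] ℝ) 1 μ := by
  rw [eLpNorm_one_eq_lintegral_enorm, wint]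
  refine lintegral_congr_ae ?_
  filter_upwards [ev_nonneg.mp hf] with x hx
  change ENNReal.ofReal (ev f x) = ‖ev f x‖ₑ
  rw [← ofReal_norm, Real.norm_eq_abs, abs_of_nonneg hx]

lemma IsPosDS.pds {T : (Ω →ₘ[μ] ℝ) → (Ω →ₘ[μ] ℝ)} (hT : IsPosDS μ T) : PDS hT.op := by
  have hpos : IsPosOp hT.op := fun f hf => hT.map_pos _ f.2 hf
  refine ⟨hpos, fun f hf => ?_, ?_⟩
  · rw [wint_eq_eLpNorm hf, wint_eq_eLpNorm (hpos f hf)]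
    exact hT.norm_one _ f.2
  · have h1 : eLpNorm (wone μ : Ω →ₘ[μ] ℝ) ⊤ μ ≤ ENNReal.ofReal 1 := by
      apply eLpNorm_top_le
      filter_upwards [ev_one (μ := μ)] with x hx
      change |ev (wone μ) x| ≤ 1
      rw [hx]; simp
    have h2 := (hT.norm_top _ (wone μ).2).trans h1
    rw [ev_le]
    have hb : ∀ᵐ x ∂μ, ‖(T (wone μ)) x‖ₑ ≤ eLpNorm (T (wone μ)) ⊤ μ := by
      rw [eLpNorm_exponent_top]; exact enorm_ae_le_eLpNormEssSup _ _
    filter_upwards [hb, ev_one (μ := μ)] with x h3 h4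
    rw [h4]
    have h5 := h3.trans h2
    rw [← ofReal_norm, ENNReal.ofReal_le_ofReal_iff zero_le_one] at h5
    exact (le_abs_self _).trans h5

lemma op_pow_coe {T : (Ω →ₘ[μ] ℝ) → (Ω →ₘ[μ] ℝ)} (hT : IsPosDS μ T) (k : ℕ) (f : WS μ) :
    T^[k] (f : Ω →ₘ[μ] ℝ) = ((hT.op ^ k) f : WS μ) := by
  induction k generalizing f with
  | zero => rfl
  | succ k ih =>
    rw [Function.iterate_succ_apply, pow_succ, Module.End.mul_apply, ← ih]
    rfl

variable {A : Type*} [CommRing A] [Algebra ℝ A] (ρ : A →ₐ[ℝ] Module.End ℝ (WS μ))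

lemma pcone_rho : PCone (fun a : A => IsPosOp (ρ a)) where
  one := by simpa using PDS.id.pos
  add a b ha hb := by
    intro f hf; rw [map_add]; exact add_nonneg (ha f hf) (hb f hf)
  mul a b ha hb := by
    intro f hf; rw [map_mul]; exact ha _ (hb f hf)
  smul c a hc ha := by
    intro f hf; rw [map_smul]; exact w_smul_nonneg hc (ha f hf)

lemma pds_apsi {a : A} (ha : PDS (ρ a)) (M : ℕ) : PDS (ρ (apsi M a)) := by
  have := PDS.comb (S := fun k => (ρ a) ^ k) (fun k => ha.pow k) M (fun k => bco k 1) (fun k => bco_nonneg k 1)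
    (bco_one_sum_le M)
  simpa [apsi] using this

lemma rho_aavg (a : A) (n : ℕ) : ρ (aavg n a) = (n:ℝ)⁻¹ • ∑ k ∈ Finset.range n, (ρ a) ^ k := by
  simp [aavg]

lemma pds_aavg {a : A} (ha : PDS (ρ a)) (n : ℕ) : PDS (ρ (aavg n a)) := by
  have := PDS.comb (S := fun k => (ρ a) ^ k) (fun k => ha.pow k) n (fun k => (n:ℝ)⁻¹) (fun k => by positivity)
    (by simp only [Finset.sum_const, Finset.card_range, nsmul_eq_mul]; exact mul_inv_le_one)
  rw [rho_aavg, Finset.smul_sum]; exact this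

variable {d : ℕ} (t : Fin d → A)

noncomputable def mavg {A : Type*} [CommRing A] [Algebra ℝ A] {d : ℕ} (t : Fin d → A) (n : Fin d → ℕ) : A :=
  ∏ i, aavg (n i) (t i)

lemma pds_prod {ι : Type*} (s : Finset ι) (a : ι → A) (ha : ∀ i ∈ s, PDS (ρ (a i))) : PDS (ρ (∏ i ∈ s, a i)) :=
  Finset.prod_induction a (fun a => PDS (ρ a)) (fun a b ha hb => by rw [map_mul]; exact ha.mul hb)
    (by simpa using PDS.id) ha

lemma pds_mavg (ht : ∀ i, PDS (ρ (t i))) (n : Fin d → ℕ) : PDS (ρ (mavg t n)) :=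
  pds_prod ρ _ _ fun i _ => pds_aavg ρ (ht i) _

lemma aavg_le {P : A → Prop} (h : PCone P) {a : A} (ha : P a) {n N : ℕ} (hn : 1 ≤ n) (hnN : n ≤ N) {c : ℝ}
    (hc : (N:ℝ) ≤ c * n) : P (c • aavg N a - aavg n a) := by
  have hn0 : (0:ℝ) < n := by exact_mod_cast hn
  have hN0 : (0:ℝ) < N := by exact_mod_cast hn.trans hnN
  obtain ⟨m, rfl⟩ := Nat.exists_eq_add_of_le hnN
  have e : c • aavg (n+m) a - aavg n a = (n:ℝ)⁻¹ • (∑ k ∈ Finset.range m, a ^ (n+k))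
      + (c * ((n+m:ℕ):ℝ)⁻¹ - (n:ℝ)⁻¹) • ∑ k ∈ Finset.range (n+m), a ^ k := by
    simp only [aavg]
    rw [_root_.sub_smul, smul_smul, Finset.sum_range_add, smul_add, smul_add]
    abel
  rw [e]
  refine h.add _ _ (h.smul _ _ (by positivity) (h.sum _ _ fun k _ => h.pow ha _))
    (h.smul _ _ ?_ (h.sum _ _ fun k _ => h.pow ha _))
  rw [sub_nonneg, ← div_eq_mul_inv, le_div_iff₀ hN0, inv_mul_le_iff₀ hn0]
  linarith

lemma maximal_pos (ht : ∀ i, PDS (ρ (t i))) (n : ℕ → Fin d → ℕ) (hn : ∀ k i, 1 ≤ n k i) (c₀ : ℝ)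
    (hc : ∀ k i j, (n k i : ℝ) ≤ c₀ * n k j) :
    ∃ K : ℝ, 0 < K ∧ ∀ u : WS μ, 0 ≤ u → wint u ≠ ∞ → ∀ lam : ℝ, 0 < lam →
      ∃ E : Set Ω, MeasurableSet E ∧ ENNReal.ofReal lam * μ E ≤ ENNReal.ofReal K * wint u ∧
        ∀ k x, x ∉ E → ev (ρ (mavg t (n k)) u) x ≤ lam := by
  obtain ⟨C, hC, s, hs, H⟩ := brunel_fin (pcone_rho ρ) (fun a => PDS (ρ a)) (fun a h => h.pos)
    (by simpa using PDS.id) (fun M a b ha hb => by rw [map_mul]; exact (pds_apsi ρ ha M).mul (pds_apsi ρ hb M)) t ht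
  have hP := pcone_rho (μ := μ) ρ
  set N : ℕ → ℕ := fun k => 1 + ∑ i, n k i with hN
  have hN1 : ∀ k, 1 ≤ N k := fun k => Nat.le_add_right _ _
  have hnN : ∀ k i, n k i ≤ N k := fun k i =>
    (Finset.single_le_sum (f := fun i => n k i) (fun _ _ => Nat.zero_le _) (Finset.mem_univ i)).trans (Nat.le_add_left _ _)
  set c1 : ℝ := 1 + d * |c₀| with hc1
  have hNc : ∀ k j, (N k : ℝ) ≤ c1 * n k j := by
    intro k j
    have h1 : (1:ℝ) ≤ n k j := by exact_mod_cast hn k j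
    have h2 : ∑ i, (n k i : ℝ) ≤ ∑ i : Fin d, |c₀| * n k j :=
      Finset.sum_le_sum fun i _ => (hc k i j).trans (by gcongr; exact le_abs_self _)
    rw [Finset.sum_const, Finset.card_univ, Fintype.card_fin, nsmul_eq_mul] at h2
    simp only [hN, hc1]; push_cast; linarith
  have hc10 : 0 ≤ c1 := by positivity
  set K0 : ℝ := c1^d * C with hK0
  have hK00 : 0 ≤ K0 := by positivity
  have dom : ∀ M, ∃ U, PDS (ρ U) ∧ ∀ k, N k ≤ M → IsPosOp (ρ (K0 • aavg (s (N k)) U - mavg t (n k))) := by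
    intro M
    obtain ⟨U, hU, hU'⟩ := H M
    refine ⟨U, hU, fun k hk => ?_⟩
    have h1 := (hP.prod_le Finset.univ (fun i => aavg (n k i) (t i)) (fun i => c1 • aavg (N k) (t i))
      (fun i _ => hP.aavg (ht i).pos _) (fun i _ => aavg_le hP (ht i).pos (hn k i) (hnN k i) (hNc k i))).1
    have h2 := hP.smul (c1^d) _ (by positivity) (hU' (N k) (hN1 k) hk)
    refine hP.trans h1 ?_
    convert h2 using 3
    rw [smul_sub, smul_smul, Finset.prod_smul]
    simp [hK0]
  refine ⟨K0 + 1, by positivity, fun u hu hui lam hl => ?_⟩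
  set B : ℕ → Set Ω := fun k => {x | lam < ev (ρ (mavg t (n k)) u) x} with hB
  have hBm : ∀ k, MeasurableSet (B k) := fun k => measurableSet_lt measurable_const (ev_meas _)
  refine ⟨⋃ k, B k, MeasurableSet.iUnion hBm, ?_, fun k x hx => ?_⟩
  · rw [measure_iUnion_eq_iSup_accumulate, ENNReal.mul_iSup]
    refine iSup_le fun K1 => ?_
    obtain ⟨U, hU, hU'⟩ := dom ((Finset.range (K1+1)).sup N)
    obtain ⟨E, hE, hE1, hE2⟩ := hopf hU u hu hui (lam / (K0+1)) (by positivity)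
      ((Finset.range (K1+1)).sup fun k => s (N k))
    have hsub : ∀ k ≤ K1, μ (B k \ E) = 0 := by
      intro k hk
      have a1 := hE2 (s (N k)) (hs _ (hN1 k)) (Finset.le_sup (f := fun k => s (N k)) (by simp; omega))
      have a2 := hU' k (Finset.le_sup (by simp; omega)) u hu
      rw [map_sub, LinearMap.sub_apply, sub_nonneg, map_smul, LinearMap.smul_apply] at a2
      have a3 := ev_le.mp a2
      have a4 := ev_nonneg.mp ((pds_aavg ρ hU (s (N k))).pos u hu)
      have a5 : ∀ᵐ x ∂μ, ¬ (x ∈ B k \ E) := by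
        rw [← LinearMap.smul_apply, ← rho_aavg] at a1
        filter_upwards [a1, a3, a4, ev_smul K0 (ρ (aavg (s (N k)) U) u)] with x b1 b3 b4 b5
        rintro ⟨hx1, hx2⟩
        have b1 := b1 hx2
        have hx1 : lam < ev (ρ (mavg t (n k)) u) x := hx1
        rw [b5] at b3
        rw [le_div_iff₀ (by positivity)] at b1
        linarith
      have a6 := ae_iff.mp a5
      simpa only [not_not, Set.setOf_mem_eq] using a6
    have hacc : μ (Set.accumulate B K1) ≤ μ E := by
      have h1 : Set.accumulate B K1 ⊆ E ∪ ⋃ k ∈ Set.Iic K1, (B k \ E) := by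
        intro x hx
        obtain ⟨k, hk, hx⟩ := Set.mem_accumulate.mp hx
        by_cases hxE : x ∈ E
        · exact Or.inl hxE
        · refine Or.inr (Set.mem_biUnion (x := k) hk ⟨hx, hxE⟩)
      refine (measure_mono h1).trans ((measure_union_le _ _).trans ?_)
      have h2 : μ (⋃ k ∈ Set.Iic K1, (B k \ E)) = 0 := by
        rw [measure_biUnion_null_iff (Set.to_countable _)]
        intro k hk
        exact hsub k hk
      rw [h2, add_zero]
    calc ENNReal.ofReal lam * μ (Set.accumulate B K1) ≤ ENNReal.ofReal lam * μ E := by gcongr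
      _ = ENNReal.ofReal (K0+1) * (ENNReal.ofReal (lam / (K0+1)) * μ E) := by
          rw [← mul_assoc, ← ENNReal.ofReal_mul (by positivity)]
          congr 2
          field_simp
      _ ≤ _ := by gcongr
  · by_contra h
    exact hx (Set.mem_iUnion.mpr ⟨k, not_le.mp h⟩)

noncomputable def wexc (δ : ℝ) (g : WS μ) : WS μ := wpos (wabs g - δ • wone μ)

lemma ev_wexc (δ : ℝ) (g : WS μ) : ∀ᵐ x ∂μ, ev (wexc δ g) x = max (|ev g x| - δ) 0 := by
  filter_upwards [ev_pos (wabs g - δ • wone μ), ev_sub (wabs g) (δ • wone μ), ev_abs g, ev_smul δ (wone μ),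
    ev_one (μ := μ)] with x h1 h2 h3 h4 h5
  rw [wexc, h1, h2, h3, h4, h5, mul_one]

lemma wint_wexc (δ : ℝ) (g : WS μ) : wint (wexc δ g) = exc δ (g : Ω →ₘ[μ] ℝ) := by
  refine lintegral_congr_ae ?_
  filter_upwards [ev_wexc δ g] with x hx
  rw [hx, ENNReal.ofReal_max]; simp; rfl

lemma wexc_nonneg (δ : ℝ) (g : WS μ) : 0 ≤ wexc δ g := by
  rw [ev_nonneg]
  filter_upwards [ev_wexc δ g] with x hx
  rw [hx]; exact le_max_right _ _

lemma PDS.abs_le {S : Module.End ℝ (WS μ)} (hS : PDS S) {δ : ℝ} (hδ : 0 ≤ δ) (g : WS μ) :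
    ∀ᵐ x ∂μ, |ev (S g) x| ≤ ev (S (wexc δ g)) x + δ := by
  have h0 : ∀ᵐ x ∂μ, |ev g x| ≤ ev (wexc δ g + δ • wone μ) x := by
    filter_upwards [ev_wexc δ g, ev_add (wexc δ g) (δ • wone μ), ev_smul δ (wone μ), ev_one (μ := μ)] with x h1 h2 h3 h4
    rw [h2, h3, h4, h1]
    linarith [le_max_left (|ev g x| - δ) 0]
  have h1 : g ≤ wexc δ g + δ • wone μ := ev_le.mpr (by
    filter_upwards [h0] with x hx using (le_abs_self _).trans hx)
  have h2 : (-1:ℝ) • g ≤ wexc δ g + δ • wone μ := ev_le.mpr (by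
    filter_upwards [h0, ev_smul (-1) g] with x hx hx2
    rw [hx2]; linarith [neg_le_abs (ev g x)])
  have h3 := ev_le.mp (hS.pos.mono h1)
  have h4 := ev_le.mp (hS.pos.mono h2)
  have h5 := ev_le.mp hS.one
  rw [map_add, map_smul] at h3
  rw [map_add, map_smul, map_smul] at h4
  filter_upwards [h3, h4, h5, ev_add (S (wexc δ g)) (δ • S (wone μ)), ev_smul δ (S (wone μ)), ev_smul (-1) (S g), ev_one (μ := μ)]
    with x b1 b2 b3 b4 b5 b6 b7
  rw [b4, b5] at b1
  rw [b6, b4, b5] at b2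
  rw [b7] at b3
  rw [_root_.abs_le]
  constructor <;> nlinarith

lemma PDS.exc_le {S : Module.End ℝ (WS μ)} (hS : PDS S) {δ : ℝ} (hδ : 0 ≤ δ) (g : WS μ) :
    exc δ (S g : Ω →ₘ[μ] ℝ) ≤ exc δ (g : Ω →ₘ[μ] ℝ) := by
  rw [← wint_wexc δ g]
  refine le_trans (lintegral_mono_ae ?_) (hS.int _ (wexc_nonneg δ g))
  filter_upwards [hS.abs_le hδ g] with x hx
  apply ENNReal.ofReal_le_ofReal
  change |ev (S g) x| - δ ≤ _
  linarith

lemma maximal (ht : ∀ i, PDS (ρ (t i))) (n : ℕ → Fin d → ℕ) (hn : ∀ k i, 1 ≤ n k i) (c₀ : ℝ)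
    (hc : ∀ k i j, (n k i : ℝ) ≤ c₀ * n k j) :
    ∃ K : ℝ, 0 < K ∧ ∀ (g : WS μ) (δ : ℝ), 0 ≤ δ → exc δ (g : Ω →ₘ[μ] ℝ) ≠ ∞ → ∀ lam : ℝ, 0 < lam →
      ∃ E : Set Ω, MeasurableSet E ∧ ENNReal.ofReal lam * μ E ≤ ENNReal.ofReal K * exc δ (g : Ω →ₘ[μ] ℝ) ∧
        ∀ k, ∀ᵐ x ∂μ, x ∉ E → |ev (ρ (mavg t (n k)) g) x| ≤ lam + δ := by
  obtain ⟨K, hK, H⟩ := maximal_pos ρ t ht n hn c₀ hc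
  refine ⟨K, hK, fun g δ hδ hg lam hl => ?_⟩
  rw [← wint_wexc] at hg ⊢
  obtain ⟨E, hE, hE1, hE2⟩ := H _ (wexc_nonneg δ g) hg lam hl
  refine ⟨E, hE, hE1, fun k => ?_⟩
  filter_upwards [(pds_mavg ρ t ht (n k)).abs_le hδ g] with x hx hxE
  linarith [hE2 k x hxE]

end opers

section good
variable {μ : Measure Ω}

def Good (F : ℕ → Module.End ℝ (WS μ)) (f : WS μ) : Prop :=
  ∀ δ : ℝ, 0 < δ → ∃ E : Set Ω, MeasurableSet E ∧ μ E ≤ ENNReal.ofReal δ ∧ ∃ K : ℕ, ∀ k l, K ≤ k → K ≤ l →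
    ∀ᵐ x ∂μ, x ∉ E → |ev (F k f) x - ev (F l f) x| ≤ δ

def MaxIneq (F : ℕ → Module.End ℝ (WS μ)) : Prop :=
  ∃ K : ℝ, 0 < K ∧ ∀ (g : WS μ) (δ : ℝ), 0 ≤ δ → exc δ (g : Ω →ₘ[μ] ℝ) ≠ ∞ → ∀ lam : ℝ, 0 < lam →
      ∃ E : Set Ω, MeasurableSet E ∧ ENNReal.ofReal lam * μ E ≤ ENNReal.ofReal K * exc δ (g : Ω →ₘ[μ] ℝ) ∧
        ∀ k, ∀ᵐ x ∂μ, x ∉ E → |ev (F k g) x| ≤ lam + δ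

variable {F : ℕ → Module.End ℝ (WS μ)}

lemma measure_union_half {E E' : Set Ω} {δ : ℝ} (hδ : 0 < δ) (h : μ E ≤ ENNReal.ofReal (δ/2))
    (h' : μ E' ≤ ENNReal.ofReal (δ/2)) : μ (E ∪ E') ≤ ENNReal.ofReal δ := by
  refine (measure_union_le _ _).trans ((add_le_add h h').trans (le_of_eq ?_))
  rw [← ENNReal.ofReal_add (by positivity) (by positivity)]; congr 1; ring

lemma Good.add {f g : WS μ} (hf : Good F f) (hg : Good F g) : Good F (f + g) := by
  intro δ hδ
  obtain ⟨E, hE, hE1, K, hK⟩ := hf (δ/2) (by positivity)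
  obtain ⟨E', hE', hE1', K', hK'⟩ := hg (δ/2) (by positivity)
  refine ⟨E ∪ E', hE.union hE', measure_union_half hδ hE1 hE1', max K K', fun k l hk hl => ?_⟩
  rw [map_add, map_add]
  filter_upwards [hK k l (by omega) (by omega), hK' k l (by omega) (by omega), ev_add (F k f) (F k g),
    ev_add (F l f) (F l g)] with x h1 h2 h3 h4 hx
  simp only [Set.mem_union, not_or] at hx
  have a := h1 hx.1
  have b := h2 hx.2
  rw [abs_le] at *
  rw [h3, h4]
  constructor <;> linarith

lemma Good.smul (c : ℝ) {f : WS μ} (hf : Good F f) : Good F (c • f) := by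
  intro δ hδ
  have hc : 0 < |c| + 1 := by positivity
  obtain ⟨E, hE, hE1, K, hK⟩ := hf (min δ (δ/(|c|+1))) (by positivity)
  refine ⟨E, hE, hE1.trans (ENNReal.ofReal_le_ofReal (min_le_left _ _)), K, fun k l hk hl => ?_⟩
  rw [map_smul, map_smul]
  filter_upwards [hK k l hk hl, ev_smul c (F k f), ev_smul c (F l f)] with x h1 h2 h3 hx
  have a := (h1 hx).trans (min_le_right _ _)
  rw [h2, h3, ← mul_sub, abs_mul]
  rw [le_div_iff₀ hc] at a
  nlinarith [abs_nonneg (ev (F k f) x - ev (F l f) x)]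

lemma Good.of_approx (hM : MaxIneq F) {f : WS μ}
    (h : ∀ ε : ℝ, 0 < ε → ∃ f', Good F f' ∧ exc ε ((f - f' : WS μ) : Ω →ₘ[μ] ℝ) ≤ ENNReal.ofReal ε) : Good F f := by
  intro δ hδ
  obtain ⟨K, hK, H⟩ := hM
  set ε := min (δ/8) (δ^2/(16*K)) with hε
  have hε0 : 0 < ε := by positivity
  obtain ⟨f', hf', he⟩ := h ε hε0
  obtain ⟨E, hE, hE1, hE2⟩ := H (f - f') ε hε0.le (ne_top_of_le_ne_top ENNReal.ofReal_ne_top he) (δ/8) (by positivity)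
  obtain ⟨E', hE', hE1', K', hK'⟩ := hf' (δ/2) (by positivity)
  have hEm : μ E ≤ ENNReal.ofReal (δ/2) := by
    have h1 : ENNReal.ofReal (δ/8) * μ E ≤ ENNReal.ofReal (δ/8) * ENNReal.ofReal (δ/2) := by
      refine hE1.trans ((mul_le_mul_right he _).trans ?_)
      rw [← ENNReal.ofReal_mul hK.le, ← ENNReal.ofReal_mul (by positivity)]
      apply ENNReal.ofReal_le_ofReal
      calc K * ε ≤ K * (δ^2/(16*K)) := by gcongr; exact min_le_right _ _
        _ = δ/8 * (δ/2) := by field_simp; norm_num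
    exact (ENNReal.mul_le_mul_iff_right (by simp; positivity) ENNReal.ofReal_ne_top).mp h1
  refine ⟨E ∪ E', hE.union hE', measure_union_half hδ hEm hE1', K', fun k l hk hl => ?_⟩
  have e1 := hE2 k
  have e2 := hE2 l
  rw [map_sub] at e1 e2
  filter_upwards [hK' k l hk hl, e1, e2, ev_sub (F k f) (F k f'), ev_sub (F l f) (F l f')] with x h1 h2 h3 h4 h5 hx
  simp only [Set.mem_union, not_or] at hx
  have a := h1 hx.2
  have b := h2 hx.1
  have c := h3 hx.1
  have : ε ≤ δ/8 := min_le_left _ _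
  rw [h4] at b
  rw [h5] at c
  rw [abs_le] at *
  constructor <;> linarith

lemma PDS.bdd {S : Module.End ℝ (WS μ)} (hS : PDS S) {B : ℝ} (hB : 0 ≤ B) {g : WS μ} (hg : ∀ᵐ x ∂μ, |ev g x| ≤ B) :
    ∀ᵐ x ∂μ, |ev (S g) x| ≤ B := by
  have h0 : wexc B g = 0 := by
    apply ev_ext
    filter_upwards [ev_wexc B g, hg, ev_zero (μ := μ)] with x h1 h2 h3
    rw [h1, h3]; exact max_eq_right (by linarith)
  have := hS.abs_le hB g
  rw [h0, map_zero] at this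
  filter_upwards [this, ev_zero (μ := μ)] with x h1 h2
  rw [h2] at h1; linarith

/-- the excess at level `C` tends to zero -/
lemma exc_tendsto (f : Ω →ₘ[μ] ℝ) (hf : MemL1pLinf μ f) : Tendsto (fun m : ℕ => exc (m:ℝ) f) atTop (𝓝 0) := by
  obtain ⟨C, hC, h⟩ := (memW_iff f).mp hf
  obtain ⟨N, hN⟩ := exists_nat_ge C
  rw [← tendsto_add_atTop_iff_nat N]
  have : (0:ℝ≥0∞) = ∫⁻ x, 0 ∂μ := by simp
  rw [this]
  refine tendsto_lintegral_of_dominated_convergence (fun x => ENNReal.ofReal (|f x| - C)) ?_ ?_ h ?_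
  · intro m; fun_prop
  · intro m
    refine Eventually.of_forall fun x => ENNReal.ofReal_le_ofReal ?_
    push_cast
    have : (0:ℝ) ≤ m := by positivity
    linarith
  · refine Eventually.of_forall fun x => tendsto_const_nhds.congr' ?_
    obtain ⟨M, hM⟩ := exists_nat_ge |f x|
    filter_upwards [eventually_ge_atTop M] with m hm
    symm
    rw [ENNReal.ofReal_eq_zero]
    have : (M:ℝ) ≤ m := by exact_mod_cast hm
    have : (0:ℝ) ≤ N := by positivity
    push_cast
    linarith

lemma exc_anti {C D : ℝ} (h : C ≤ D) (f : Ω →ₘ[μ] ℝ) : exc D f ≤ exc C f :=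
  lintegral_mono fun x => ENNReal.ofReal_le_ofReal (by linarith)

lemma exc_small (f : Ω →ₘ[μ] ℝ) (hf : MemL1pLinf μ f) (ε : ℝ) (hε : 0 < ε) : ∃ C : ℝ, ε ≤ C ∧ exc C f ≤ ENNReal.ofReal ε := by
  obtain ⟨m, hm⟩ := ((exc_tendsto f hf).eventually_lt_const (u := ENNReal.ofReal ε) (by simpa using hε)).exists
  exact ⟨max ε m, le_max_left _ _, (exc_anti (le_max_right _ _) f).trans hm.le⟩

noncomputable def wtrn (C : ℝ) (hC : 0 ≤ C) (f : WS μ) : WS μ := ⟨trn C f, memW_bdd (trn_le C hC _)⟩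

lemma ev_wtrn (C : ℝ) (hC : 0 ≤ C) (f : WS μ) : ∀ᵐ x ∂μ, ev (wtrn C hC f) x = max (-C) (min C (ev f x)) :=
  trn_ae C _

lemma exc_zero_wtrn (C : ℝ) (hC : 0 ≤ C) (f : WS μ) : exc 0 ((f - wtrn C hC f : WS μ) : Ω →ₘ[μ] ℝ) = exc C (f : Ω →ₘ[μ] ℝ) := by
  refine lintegral_congr_ae ?_
  filter_upwards [sub_trn_ae C hC (f : Ω →ₘ[μ] ℝ)] with x hx
  have : |((f - wtrn C hC f : WS μ) : Ω →ₘ[μ] ℝ) x| = _ := hx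
  rw [this, sub_zero, ENNReal.ofReal_max]; simp

lemma exc_zero_sub (f g : WS μ) : exc 0 ((f - g : WS μ) : Ω →ₘ[μ] ℝ) ≤ exc 0 (f : Ω →ₘ[μ] ℝ) + exc 0 (g : Ω →ₘ[μ] ℝ) := by
  simp only [exc, sub_zero]
  rw [← lintegral_add_left (by fun_prop)]
  refine lintegral_mono_ae ?_
  filter_upwards [ev_sub f g] with x hx
  rw [← ENNReal.ofReal_add (abs_nonneg _) (abs_nonneg _)]
  apply ENNReal.ofReal_le_ofReal
  change |ev (f - g) x| ≤ |ev f x| + |ev g x|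
  rw [hx]; exact abs_sub _ _

variable {A : Type*} [CommRing A] [Algebra ℝ A] (ρ : A →ₐ[ℝ] Module.End ℝ (WS μ)) {d : ℕ} (t : Fin d → A)

lemma mavg_fixed (f : WS μ) (hf : ∀ i, ρ (t i) f = f) (n : Fin d → ℕ) (hn : ∀ i, 1 ≤ n i) : ρ (mavg t n) f = f := by
  refine Finset.prod_induction _ (fun a => ρ a f = f) (fun a b ha hb => ?_) (by simp) (fun i _ => ?_)
  · rw [map_mul, Module.End.mul_apply, hb, ha]
  · rw [rho_aavg, LinearMap.smul_apply, LinearMap.sum_apply]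
    have : ∀ k, ((ρ (t i))^k) f = f := by
      intro k
      induction k with
      | zero => rfl
      | succ k ih => rw [pow_succ, Module.End.mul_apply, hf, ih]
    simp only [this, Finset.sum_const, Finset.card_range]
    rw [← Nat.cast_smul_eq_nsmul ℝ, smul_smul, inv_mul_cancel₀, one_smul]
    have := hn i
    positivity

variable (n : ℕ → Fin d → ℕ)

lemma good_fixed (hn : ∀ k i, 1 ≤ n k i) (f : WS μ) (hf : ∀ i, ρ (t i) f = f) : Good (fun k => ρ (mavg t (n k))) f := by
  intro δ hδ
  refine ⟨∅, MeasurableSet.empty, by simp, 0, fun k l _ _ => Eventually.of_forall fun x _ => ?_⟩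
  rw [mavg_fixed ρ t f hf _ (hn k), mavg_fixed ρ t f hf _ (hn l)]
  simpa using hδ.le

lemma mavg_cob (n : Fin d → ℕ) (i : Fin d) : mavg t n * (1 - t i) =
    ((n i : ℝ)⁻¹) • ((∏ j ∈ Finset.univ.erase i, aavg (n j) (t j)) * (1 - t i ^ (n i))) := by
  classical
  rw [mavg, ← Finset.mul_prod_erase _ _ (Finset.mem_univ i), aavg, ← mul_neg_geom_sum (t i) (n i)]
  simp only [smul_mul_assoc, mul_smul_comm]
  congr 1; ring

lemma good_cob_bdd (ht : ∀ i, PDS (ρ (t i))) (hn : ∀ k i, 1 ≤ n k i) (hinf : ∀ i, Tendsto (fun k => n k i) atTop atTop)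
    (i : Fin d) (g : WS μ) {B : ℝ} (hB : 0 ≤ B) (hg : ∀ᵐ x ∂μ, |ev g x| ≤ B) :
    Good (fun k => ρ (mavg t (n k))) (g - ρ (t i) g) := by
  have key : ∀ k, ∀ᵐ x ∂μ, |ev (ρ (mavg t (n k)) (g - ρ (t i) g)) x| ≤ (n k i : ℝ)⁻¹ * (2 * B) := by
    intro k
    have e : ρ (mavg t (n k)) (g - ρ (t i) g) =
        (n k i : ℝ)⁻¹ • (ρ (∏ j ∈ Finset.univ.erase i, aavg (n k j) (t j)) (g - (ρ (t i) ^ (n k i)) g)) := by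
      have h1 : g - ρ (t i) g = ρ (1 - t i) g := by simp
      have h2 : g - (ρ (t i) ^ (n k i)) g = ρ (1 - t i ^ (n k i)) g := by simp
      rw [h1, h2, ← Module.End.mul_apply, ← Module.End.mul_apply, ← map_mul, ← map_mul, mavg_cob, map_smul]; rfl
    have b1 := ((ht i).pow (n k i)).bdd hB hg
    have b2 : ∀ᵐ x ∂μ, |ev (g - (ρ (t i) ^ (n k i)) g) x| ≤ 2 * B := by
      filter_upwards [b1, hg, ev_sub g ((ρ (t i) ^ (n k i)) g)] with x h1 h2 h3
      rw [h3]; linarith [abs_sub (ev g x) (ev ((ρ (t i) ^ (n k i)) g) x)]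
    have b3 := (pds_prod ρ (Finset.univ.erase i) (fun j => aavg (n k j) (t j)) fun j _ => pds_aavg ρ (ht j) _).bdd
      (by positivity) b2
    rw [e]
    filter_upwards [b3, ev_smul (n k i : ℝ)⁻¹ (ρ (∏ j ∈ Finset.univ.erase i, aavg (n k j) (t j)) (g - (ρ (t i) ^ (n k i)) g))]
      with x h1 h2
    rw [h2, abs_mul, abs_of_nonneg (by positivity)]
    gcongr
  have lim : Tendsto (fun k => (n k i : ℝ)⁻¹ * (2 * B)) atTop (𝓝 0) := by
    have : Tendsto (fun k => (n k i : ℝ)⁻¹) atTop (𝓝 0) :=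
      tendsto_inv_atTop_zero.comp (tendsto_natCast_atTop_atTop.comp (hinf i))
    simpa using this.mul_const (2*B)
  intro δ hδ
  obtain ⟨K, hK⟩ := eventually_atTop.mp (lim.eventually_lt_const (u := δ/2) (by positivity))
  refine ⟨∅, MeasurableSet.empty, by simp, K, fun k l hk hl => ?_⟩
  filter_upwards [key k, key l] with x h1 h2 _
  have := hK k hk
  have := hK l hl
  rw [abs_le] at *
  constructor <;> linarith

lemma good_cob (hM : MaxIneq fun k => ρ (mavg t (n k)))
    (ht : ∀ i, PDS (ρ (t i))) (hn : ∀ k i, 1 ≤ n k i) (hinf : ∀ i, Tendsto (fun k => n k i) atTop atTop)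
    (i : Fin d) (g : WS μ) : Good (fun k => ρ (mavg t (n k))) (g - ρ (t i) g) := by
  refine Good.of_approx hM fun ε hε => ?_
  obtain ⟨C, hC, hC'⟩ := exc_small (g : Ω →ₘ[μ] ℝ) g.2 (ε/2) (by positivity)
  have hC0 : 0 ≤ C := by linarith
  set g' := wtrn C hC0 g with hg'
  refine ⟨g' - ρ (t i) g', good_cob_bdd ρ t n ht hn hinf i g' hC0 (trn_le C hC0 _), ?_⟩
  have e : g - ρ (t i) g - (g' - ρ (t i) g') = (g - g') - ρ (t i) (g - g') := by rw [map_sub]; abel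
  rw [e]
  refine (exc_anti hε.le _).trans ((exc_zero_sub _ _).trans ?_)
  refine (add_le_add le_rfl ((ht i).exc_le le_rfl _)).trans ?_
  rw [exc_zero_wtrn]
  refine (add_le_add hC' hC').trans (le_of_eq ?_)
  rw [← ENNReal.ofReal_add (by positivity) (by positivity)]; congr 1; ring

end good

section ltwo
variable {μ : Measure Ω}

noncomputable def l2i (f : Ω →ₘ[μ] ℝ) : ℝ≥0∞ := ∫⁻ x, ENNReal.ofReal (f x ^ 2) ∂μ

lemma eLpNorm_sq (f : Ω →ₘ[μ] ℝ) : eLpNorm f 2 μ ^ 2 = l2i f := by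
  have h := eLpNorm_nnreal_pow_eq_lintegral (f := (f : Ω → ℝ)) (μ := μ) (p := 2) (by norm_num)
  have h2 : eLpNorm f 2 μ ^ 2 = eLpNorm f ((2:NNReal):ℝ≥0∞) μ ^ ((2:NNReal):ℝ) := by
    norm_num
  rw [h2, h, l2i]
  refine lintegral_congr fun x => ?_
  rw [← ofReal_norm, Real.norm_eq_abs, ENNReal.ofReal_rpow_of_nonneg (abs_nonneg _) (by norm_num)]
  norm_num

lemma exc_le_l2i (f : Ω →ₘ[μ] ℝ) (ε : ℝ) (hε : 0 < ε) : exc ε f ≤ ENNReal.ofReal ε⁻¹ * l2i f := by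
  rw [exc, l2i, ← lintegral_const_mul _ (by fun_prop)]
  refine lintegral_mono fun x => ?_
  rw [← ENNReal.ofReal_mul (by positivity)]
  apply ENNReal.ofReal_le_ofReal
  rw [inv_mul_eq_div, le_div_iff₀ hε, ← sq_abs (f x)]
  nlinarith [sq_nonneg (|f x| - ε), abs_nonneg (f x)]

lemma memW_l2 {f : Ω →ₘ[μ] ℝ} (hf : l2i f ≠ ∞) : MemL1pLinf μ f :=
  (memW_iff f).mpr ⟨1, zero_le_one, ne_top_of_le_ne_top (ENNReal.mul_ne_top ENNReal.ofReal_ne_top hf) (exc_le_l2i f 1 one_pos)⟩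

lemma lp_l2i (f : Lp ℝ 2 μ) : l2i (f : Ω →ₘ[μ] ℝ) = ENNReal.ofReal (‖f‖ ^ 2) := by
  rw [← eLpNorm_sq, Lp.norm_def, ENNReal.ofReal_pow ENNReal.toReal_nonneg, ENNReal.ofReal_toReal (Lp.eLpNorm_ne_top f)]

lemma lp_l2i_ne (f : Lp ℝ 2 μ) : l2i (f : Ω →ₘ[μ] ℝ) ≠ ∞ := by
  rw [lp_l2i]; exact ENNReal.ofReal_ne_top

lemma mem_lp_iff {f : Ω →ₘ[μ] ℝ} (hf : l2i f ≠ ∞) : f ∈ Lp ℝ 2 μ := by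
  rw [Lp.mem_Lp_iff_eLpNorm_lt_top, lt_top_iff_ne_top]
  intro h
  rw [← eLpNorm_sq, h] at hf
  simp at hf

noncomputable def jmap : Lp ℝ 2 μ →ₗ[ℝ] WS μ where
  toFun f := ⟨f, memW_l2 (lp_l2i_ne f)⟩
  map_add' f g := rfl
  map_smul' c f := rfl

lemma PDS.l2i_le {S : Module.End ℝ (WS μ)} (hS : PDS S) (f : WS μ) (hf : l2i (f : Ω →ₘ[μ] ℝ) ≠ ∞) :
    l2i (S f : Ω →ₘ[μ] ℝ) ≤ l2i (f : Ω →ₘ[μ] ℝ) := by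
  have hsq : ∀ᵐ x ∂μ, ((f : Ω →ₘ[μ] ℝ) * (f : Ω →ₘ[μ] ℝ)) x = ev f x ^ 2 := by
    filter_upwards [AEEqFun.coeFn_mul (f : Ω →ₘ[μ] ℝ) (f : Ω →ₘ[μ] ℝ)] with x hx
    rw [hx, pow_two]; rfl
  have hmem : MemL1pLinf μ ((f : Ω →ₘ[μ] ℝ) * (f : Ω →ₘ[μ] ℝ)) := by
    refine (memW_iff _).mpr ⟨0, le_rfl, ne_top_of_le_ne_top hf (le_of_eq ?_)⟩
    refine lintegral_congr_ae ?_
    filter_upwards [hsq] with x hx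
    rw [hx, sub_zero, abs_of_nonneg (by positivity)]; rfl
  set q : WS μ := ⟨_, hmem⟩ with hq
  have hq1 : ∀ᵐ x ∂μ, ev q x = ev f x ^ 2 := hsq
  have hq0 : 0 ≤ q := ev_nonneg.mpr (by filter_upwards [hq1] with x hx; rw [hx]; positivity)
  have hqi : wint q = l2i (f : Ω →ₘ[μ] ℝ) := by
    refine lintegral_congr_ae ?_
    filter_upwards [hq1] with x hx
    rw [hx]; rfl
  have key : ∀ a : ℚ, ∀ᵐ x ∂μ, 2 * a * ev (S f) x - a^2 ≤ ev (S q) x := by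
    intro a
    have h1 : (2 * (a:ℝ)) • f ≤ q + ((a:ℝ)^2) • wone μ := by
      rw [ev_le]
      filter_upwards [hq1, ev_smul (2*(a:ℝ)) f, ev_add q (((a:ℝ)^2) • wone μ), ev_smul ((a:ℝ)^2) (wone μ), ev_one (μ := μ)]
        with x b1 b2 b3 b4 b5
      rw [b2, b3, b4, b5, b1]
      nlinarith [sq_nonneg ((a:ℝ) - ev f x)]
    have h2 := hS.pos.mono h1
    rw [map_add, map_smul, map_smul] at h2
    filter_upwards [ev_le.mp h2, ev_le.mp hS.one, ev_smul (2*(a:ℝ)) (S f), ev_add (S q) (((a:ℝ)^2) • S (wone μ)),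
      ev_smul ((a:ℝ)^2) (S (wone μ)), ev_one (μ := μ)] with x b1 b2 b3 b4 b5 b6
    rw [b3, b4, b5] at b1
    rw [b6] at b2
    nlinarith [sq_nonneg (a:ℝ)]
  have key2 : ∀ᵐ x ∂μ, ev (S f) x ^ 2 ≤ ev (S q) x := by
    filter_upwards [ae_all_iff.mpr key] with x hx
    have : ∀ r : ℝ, 2 * r * ev (S f) x - r^2 ≤ ev (S q) x := by
      intro r
      refine Rat.denseRange_cast.induction_on r ?_ hx
      exact isClosed_le (by fun_prop) continuous_const
    have := this (ev (S f) x)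
    nlinarith
  rw [← hqi]
  refine le_trans (lintegral_mono_ae ?_) (hS.int q hq0)
  filter_upwards [key2] with x hx
  exact ENNReal.ofReal_le_ofReal hx

variable {A : Type*} [CommRing A] [Algebra ℝ A] (ρ : A →ₐ[ℝ] Module.End ℝ (WS μ)) {d : ℕ} (t : Fin d → A)
variable (n : ℕ → Fin d → ℕ)

noncomputable def goodSub (F : ℕ → Module.End ℝ (WS μ)) : Submodule ℝ (Lp ℝ 2 μ) where
  carrier := {f | Good F (jmap f)}
  add_mem' := by
    intro f g hf hg
    have := Good.add hf hg
    rw [← map_add] at this; exact this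
  zero_mem' := by
    intro δ hδ
    refine ⟨∅, MeasurableSet.empty, by simp, 0, fun k l _ _ => Eventually.of_forall fun x _ => ?_⟩
    simpa using hδ.le
  smul_mem' := by
    intro c f hf
    have := Good.smul c hf
    rw [← map_smul] at this; exact this

lemma goodSub_closed {F : ℕ → Module.End ℝ (WS μ)} (hM : MaxIneq F) : IsClosed (goodSub F : Set (Lp ℝ 2 μ)) := by
  refine isClosed_of_closure_subset fun f hf => ?_
  refine Good.of_approx hM fun ε hε => ?_
  obtain ⟨f', hf', hd⟩ := Metric.mem_closure_iff.mp hf ε hε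
  refine ⟨jmap f', hf', ?_⟩
  rw [← map_sub]
  refine (exc_le_l2i _ ε hε).trans ?_
  change _ * l2i ((f - f' : Lp ℝ 2 μ) : Ω →ₘ[μ] ℝ) ≤ _
  rw [lp_l2i, ← ENNReal.ofReal_mul (by positivity)]
  apply ENNReal.ofReal_le_ofReal
  rw [dist_eq_norm] at hd
  rw [inv_mul_eq_div, div_le_iff₀ hε]
  nlinarith [norm_nonneg (f - f')]

lemma good_l2 (hM : MaxIneq fun k => ρ (mavg t (n k)))
    (ht : ∀ i, PDS (ρ (t i))) (hn : ∀ k i, 1 ≤ n k i) (hinf : ∀ i, Tendsto (fun k => n k i) atTop atTop)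
    (f : WS μ) (hf : l2i (f : Ω →ₘ[μ] ℝ) ≠ ∞) : Good (fun k => ρ (mavg t (n k))) f := by
  set K := goodSub (fun k => ρ (mavg t (n k))) with hK
  have hcl : IsClosed (K : Set (Lp ℝ 2 μ)) := goodSub_closed hM
  haveI : CompleteSpace K := hcl.completeSpace_coe
  have htop : K = ⊤ := by
    rw [← Submodule.orthogonal_eq_bot_iff, Submodule.eq_bot_iff]
    intro g hg
    have hfix : ∀ i, ρ (t i) (jmap g) = jmap g := by
      intro i
      have h1 := (ht i).l2i_le (jmap g) (lp_l2i_ne g)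
      set Tg : Lp ℝ 2 μ := ⟨ρ (t i) (jmap g), mem_lp_iff (ne_top_of_le_ne_top (lp_l2i_ne g) h1)⟩ with hTg
      have hj : jmap Tg = ρ (t i) (jmap g) := rfl
      have h2 : l2i (Tg : Ω →ₘ[μ] ℝ) ≤ l2i (g : Ω →ₘ[μ] ℝ) := h1
      rw [lp_l2i, lp_l2i, ENNReal.ofReal_le_ofReal_iff (by positivity)] at h2
      have h3 : g - Tg ∈ K := by
        change Good _ (jmap (g - Tg))
        rw [map_sub, hj]
        exact good_cob ρ t n hM ht hn hinf i (jmap g)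
      have h4 := (Submodule.mem_orthogonal _ _).mp hg _ h3
      have h5 : ‖Tg - g‖ ^ 2 ≤ 0 := by
        rw [@norm_sub_sq_real]
        rw [inner_sub_left, real_inner_self_eq_norm_sq] at h4
        linarith
      have h6 : Tg = g := by
        have := pow_eq_zero_iff (two_ne_zero) |>.mp (le_antisymm h5 (by positivity))
        exact sub_eq_zero.mp (norm_eq_zero.mp this)
      rw [← hj, h6]
    have hgK : g ∈ K := good_fixed ρ t n hn (jmap g) hfix
    have := (Submodule.mem_orthogonal _ _).mp hg _ hgK
    exact inner_self_eq_zero.mp this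
  have : (⟨f, mem_lp_iff hf⟩ : Lp ℝ 2 μ) ∈ K := by rw [htop]; trivial
  exact this

lemma trn_real {C ε x : ℝ} (hε : 0 ≤ ε) (hC : ε ≤ C) :
    |max (-C) (min C x) - max (-ε) (min ε x)| ≤ C ∧ |max (-C) (min C x) - max (-ε) (min ε x)| ≤ max (|x| - ε) 0 ∧
    |x - (max (-C) (min C x) - max (-ε) (min ε x))| - ε ≤ max (|x| - C) 0 := by
  grind

lemma good_all (hM : MaxIneq fun k => ρ (mavg t (n k)))
    (ht : ∀ i, PDS (ρ (t i))) (hn : ∀ k i, 1 ≤ n k i) (hinf : ∀ i, Tendsto (fun k => n k i) atTop atTop)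
    (f : WS μ) (hf : ∀ lam : ℝ, 0 < lam → exc lam (f : Ω →ₘ[μ] ℝ) ≠ ∞) : Good (fun k => ρ (mavg t (n k))) f := by
  refine Good.of_approx hM fun ε hε => ?_
  obtain ⟨C, hC, hC'⟩ := exc_small (f : Ω →ₘ[μ] ℝ) f.2 ε hε
  have hC0 : 0 ≤ C := by linarith
  set f' := wtrn C hC0 f - wtrn ε hε.le f with hf'
  have hev : ∀ᵐ x ∂μ, ev f' x = max (-C) (min C (ev f x)) - max (-ε) (min ε (ev f x)) := by
    filter_upwards [ev_sub (wtrn C hC0 f) (wtrn ε hε.le f), ev_wtrn C hC0 f, ev_wtrn ε hε.le f] with x h1 h2 h3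
    rw [h1, h2, h3]
  refine ⟨f', good_l2 ρ t n hM ht hn hinf f' ?_, ?_⟩
  · refine ne_top_of_le_ne_top (ENNReal.mul_ne_top (ENNReal.ofReal_ne_top (r := C)) (hf ε hε)) ?_
    rw [exc, l2i, ← lintegral_const_mul _ (by fun_prop)]
    refine lintegral_mono_ae ?_
    filter_upwards [hev] with x hx
    change ENNReal.ofReal (ev f' x ^ 2) ≤ ENNReal.ofReal C * ENNReal.ofReal (|ev f x| - ε)
    obtain ⟨h1, h2, -⟩ := trn_real (x := ev f x) hε.le hC
    rw [← hx] at h1 h2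
    have : ENNReal.ofReal (|ev f x| - ε) = ENNReal.ofReal (max (|ev f x| - ε) 0) := by
      rw [ENNReal.ofReal_max]; simp
    rw [this, ← ENNReal.ofReal_mul hC0]
    apply ENNReal.ofReal_le_ofReal
    rw [← sq_abs, pow_two]
    exact mul_le_mul h1 h2 (abs_nonneg _) hC0
  · refine le_trans (lintegral_mono_ae ?_) hC'
    filter_upwards [hev, ev_sub f f'] with x hx h2
    change ENNReal.ofReal (|ev (f - f') x| - ε) ≤ ENNReal.ofReal (|ev f x| - C)
    have : ENNReal.ofReal (|ev f x| - C) = ENNReal.ofReal (max (|ev f x| - C) 0) := by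
      rw [ENNReal.ofReal_max]; simp
    rw [this, h2, hx]
    exact ENNReal.ofReal_le_ofReal (trn_real hε.le hC).2.2

end ltwo

section limit
variable {μ : Measure Ω}

lemma au_limit (u : ℕ → Ω → ℝ) (hu : ∀ k, Measurable (u k))
    (H : ∀ δ : ℝ, 0 < δ → ∃ E : Set Ω, MeasurableSet E ∧ μ E ≤ ENNReal.ofReal δ ∧ ∃ K : ℕ, ∀ k l, K ≤ k → K ≤ l →
      ∀ᵐ x ∂μ, x ∉ E → |u k x - u l x| ≤ δ) :
    ∃ φ : Ω → ℝ, Measurable φ ∧ (∀ᵐ x ∂μ, Tendsto (fun k => u k x) atTop (𝓝 (φ x))) ∧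
      ∀ ε : ℝ, 0 < ε → ∃ E : Set Ω, MeasurableSet E ∧ μ E ≤ ENNReal.ofReal ε ∧
        ∀ η : ℝ, 0 < η → ∃ K : ℕ, ∀ k, K ≤ k → ∀ᵐ x ∂μ, x ∉ E → |u k x - φ x| ≤ η := by
  have H1 : ∀ ε : ℝ, 0 < ε → ∃ E : Set Ω, MeasurableSet E ∧ μ E ≤ ENNReal.ofReal ε ∧
      ∃ (K : ℕ → ℕ) (δ : ℕ → ℝ), Tendsto δ atTop (𝓝 0) ∧
        ∀ᵐ x ∂μ, x ∉ E → ∀ j k l, K j ≤ k → K j ≤ l → |u k x - u l x| ≤ δ j := by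
    intro ε hε
    choose E hE hE1 K hK using fun j : ℕ => H (ε / 2 / 2^j) (by positivity)
    have hsum := hasSum_geometric_two' ε
    refine ⟨⋃ j, E j, MeasurableSet.iUnion hE, ?_, K, fun j => ε/2/2^j, hsum.summable.tendsto_atTop_zero, ?_⟩
    · refine (measure_iUnion_le _).trans ((ENNReal.tsum_le_tsum hE1).trans (le_of_eq ?_))
      rw [← ENNReal.ofReal_tsum_of_nonneg (fun j => by positivity) hsum.summable, hsum.tsum_eq]
    · have : ∀ᵐ x ∂μ, ∀ j k l, K j ≤ k → K j ≤ l → x ∉ E j → |u k x - u l x| ≤ ε/2/2^j := by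
        rw [ae_all_iff]; intro j
        rw [ae_all_iff]; intro k
        rw [ae_all_iff]; intro l
        by_cases h : K j ≤ k ∧ K j ≤ l
        · filter_upwards [hK j k l h.1 h.2] with x hx _ _ using hx
        · exact Eventually.of_forall fun x h1 h2 => absurd ⟨h1, h2⟩ h
      filter_upwards [this] with x hx hxE j k l hk hl
      exact hx j k l hk hl fun h => hxE (Set.mem_iUnion.mpr ⟨j, h⟩)
  have hcau : ∀ᵐ x ∂μ, ∃ y, Tendsto (fun k => u k x) atTop (𝓝 y) := by
    choose E hE hE1 K δ hδ hK using fun m : ℕ => H1 (1/((m:ℝ)+1)) (by positivity)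
    have h0 : μ (⋂ m, E m) = 0 := by
      have h1 : ∀ m : ℕ, μ (⋂ m, E m) ≤ ENNReal.ofReal (1/((m:ℝ)+1)) := fun m =>
        (measure_mono (Set.iInter_subset _ m)).trans (hE1 m)
      have h2 : Tendsto (fun m : ℕ => ENNReal.ofReal (1/((m:ℝ)+1))) atTop (𝓝 0) := by
        simpa using ENNReal.tendsto_ofReal tendsto_one_div_add_atTop_nhds_zero_nat
      exact le_antisymm (ge_of_tendsto' h2 h1) bot_le
    have h3 : ∀ᵐ x ∂μ, x ∉ ⋂ m, E m := measure_eq_zero_iff_ae_notMem.mp h0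
    filter_upwards [h3, ae_all_iff.mpr hK] with x hx hxK
    rw [Set.mem_iInter, not_forall] at hx
    obtain ⟨m, hm⟩ := hx
    refine cauchySeq_tendsto_of_complete (Metric.cauchySeq_iff.mpr fun η hη => ?_)
    obtain ⟨j, hj⟩ := ((hδ m).eventually_lt_const hη).exists
    refine ⟨K m j, fun k hk l hl => ?_⟩
    rw [Real.dist_eq]
    exact (hxK m hm j k l hk hl).trans_lt hj
  obtain ⟨φ, hφ, hφt⟩ := measurable_limit_of_tendsto_metrizable_ae (fun k => (hu k).aemeasurable) hcau
  refine ⟨φ, hφ, hφt, fun ε hε => ?_⟩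
  obtain ⟨E, hE, hE1, K, δ, hδ, hK⟩ := H1 ε hε
  refine ⟨E, hE, hE1, fun η hη => ?_⟩
  obtain ⟨j, hj⟩ := (hδ.eventually_lt_const hη).exists
  refine ⟨K j, fun k hk => ?_⟩
  filter_upwards [hK, hφt] with x h1 h2 hx
  have h3 : Tendsto (fun l => |u k x - u l x|) atTop (𝓝 |u k x - φ x|) := (tendsto_const_nhds.sub h2).abs
  refine le_of_tendsto h3 ?_
  filter_upwards [eventually_ge_atTop (K j)] with l hl
  exact (h1 hx j k l hk hl).trans hj.le

lemma exc_of_Rmu {f : Ω →ₘ[μ] ℝ} (hf : MemRmu μ f) (lam : ℝ) (hl : 0 < lam) : exc lam f ≠ ∞ := by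
  obtain ⟨C, hC, h⟩ := (memW_iff f).mp hf.1
  have hm : MeasurableSet {x | lam < |f x|} := measurableSet_lt measurable_const (by fun_prop)
  refine ne_top_of_le_ne_top (ENNReal.add_ne_top.mpr ⟨h, ENNReal.mul_ne_top (ENNReal.ofReal_ne_top (r := C)) (hf.2 lam hl).ne⟩) ?_
  rw [← lintegral_indicator_const hm, exc, exc, ← lintegral_add_left (by fun_prop)]
  refine lintegral_mono fun x => ?_
  by_cases hx : lam < |f x|
  · rw [Set.indicator_of_mem (show x ∈ {x | lam < |f x|} from hx)]
    refine le_trans (ENNReal.ofReal_le_ofReal ?_) ENNReal.ofReal_add_le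
    linarith
  · rw [ENNReal.ofReal_of_nonpos (by linarith)]; exact bot_le

lemma Rmu_of_exc {f : Ω →ₘ[μ] ℝ} (hf : ∀ lam : ℝ, 0 < lam → exc lam f ≠ ∞) : MemRmu μ f := by
  refine ⟨(memW_iff f).mpr ⟨1, zero_le_one, hf 1 one_pos⟩, fun lam hl => ?_⟩
  have h := mul_meas_ge_le_lintegral (μ := μ) (f := fun x => ENNReal.ofReal (|f x| - lam/2)) (by fun_prop) (ENNReal.ofReal (lam/2))
  have h2 := ne_top_of_le_ne_top (hf (lam/2) (by positivity)) h
  have h3 : μ {x | ENNReal.ofReal (lam/2) ≤ ENNReal.ofReal (|f x| - lam/2)} ≠ ∞ := by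
    intro h4
    rw [h4, ENNReal.mul_top (by simpa using hl)] at h2
    exact h2 rfl
  refine lt_of_le_of_lt (measure_mono fun x hx => ?_) (lt_top_iff_ne_top.mpr h3)
  have hx : lam < |f x| := hx
  exact ENNReal.ofReal_le_ofReal (by linarith)

lemma good_conv {F : ℕ → Module.End ℝ (WS μ)} (hF : ∀ k, PDS (F k)) (f : WS μ) (hG : Good F f)
    (hf : ∀ lam : ℝ, 0 < lam → exc lam (f : Ω →ₘ[μ] ℝ) ≠ ∞) :
    ∃ fhat : Ω →ₘ[μ] ℝ, MemRmu μ fhat ∧ AuTendsto μ atTop (fun k => (F k f : Ω →ₘ[μ] ℝ)) fhat := by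
  obtain ⟨φ, hφ, hlim, hau⟩ := au_limit (fun k => ev (F k f)) (fun k => ev_meas _) hG
  set g : Ω →ₘ[μ] ℝ := AEEqFun.mk φ hφ.aestronglyMeasurable with hg
  have hgφ : ∀ᵐ x ∂μ, g x = φ x := AEEqFun.coeFn_mk _ _
  refine ⟨g, Rmu_of_exc fun lam hl => ?_, fun ε hε => ?_⟩
  · refine ne_top_of_le_ne_top (hf lam hl) ?_
    calc exc lam g ≤ ∫⁻ x, liminf (fun k => ENNReal.ofReal (|ev (F k f) x| - lam)) atTop ∂μ := by
          refine lintegral_mono_ae ?_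
          filter_upwards [hgφ, hlim] with x h1 h2
          have h3 : Tendsto (fun k => ENNReal.ofReal (|ev (F k f) x| - lam)) atTop (𝓝 (ENNReal.ofReal (|φ x| - lam))) :=
            ENNReal.tendsto_ofReal (h2.abs.sub_const lam)
          rw [h3.liminf_eq, h1]
      _ ≤ liminf (fun k => ∫⁻ x, ENNReal.ofReal (|ev (F k f) x| - lam) ∂μ) atTop := by
          refine lintegral_liminf_le fun k => ?_
          have := ev_meas (F k f)
          fun_prop
      _ ≤ liminf (fun _ : ℕ => exc lam (f : Ω →ₘ[μ] ℝ)) atTop :=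
          liminf_le_liminf (Eventually.of_forall fun k => (hF k).exc_le hl.le f)
      _ = _ := liminf_const _
  · obtain ⟨E, hE, hE1, hE2⟩ := hau ε hε
    refine ⟨Eᶜ, hE.compl, by rwa [compl_compl], ?_⟩
    rw [ENNReal.tendsto_atTop_zero]
    intro η hη
    obtain ⟨η', h0, hη'⟩ : ∃ η' : ℝ, 0 < η' ∧ ENNReal.ofReal η' ≤ η := by
      rcases eq_or_ne η ⊤ with rfl | h
      · exact ⟨1, one_pos, le_top⟩
      · exact ⟨η.toReal, ENNReal.toReal_pos hη.ne' h, ENNReal.ofReal_toReal_le⟩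
    obtain ⟨K, hK⟩ := hE2 η' h0
    refine ⟨K, fun k hk => (eLpNorm_top_le ?_).trans hη'⟩
    filter_upwards [hK k hk, hgφ, AEEqFun.coeFn_sub (F k f : Ω →ₘ[μ] ℝ) g] with x h1 h2 h3
    by_cases hx : x ∈ E
    · rw [Set.indicator_of_notMem (by simpa using hx)]; simpa using h0.le
    · rw [Set.indicator_of_mem (by simpa using hx), h3, Pi.sub_apply, h2]
      exact h1 hx

variable {A : Type*} [CommRing A] [Algebra ℝ A] (ρ : A →ₐ[ℝ] Module.End ℝ (WS μ)) {d : ℕ} (t : Fin d → A)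

lemma iterComp_eq (T : Fin d → (Ω →ₘ[μ] ℝ) → (Ω →ₘ[μ] ℝ)) (hT : ∀ i, IsPosDS μ (T i))
    (hρ : ∀ i, ρ (t i) = (hT i).op) (k : Fin d → ℕ) (f : WS μ) :
    iterComp T k (f : Ω →ₘ[μ] ℝ) = (ρ (∏ i, t i ^ k i) f : WS μ) := by
  have key : ∀ L : List (Fin d), ((L.map fun i => (T i)^[k i]).foldr (· ∘ ·) id) (f : Ω →ₘ[μ] ℝ)
      = (ρ ((L.map fun i => t i ^ k i).prod) f : WS μ) := by
    intro L
    induction L with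
    | nil => simp
    | cons i L ih =>
      rw [List.map_cons, List.foldr_cons, Function.comp_apply, ih, List.map_cons, List.prod_cons, map_mul,
        Module.End.mul_apply, map_pow, hρ, op_pow_coe]
  rw [iterComp, List.ofFn_eq_map, key, Fin.prod_univ_def]

lemma multiAvg_eq (T : Fin d → (Ω →ₘ[μ] ℝ) → (Ω →ₘ[μ] ℝ)) (hT : ∀ i, IsPosDS μ (T i))
    (hρ : ∀ i, ρ (t i) = (hT i).op) (n : Fin d → ℕ) (f : WS μ) :
    multiAvg μ T n (f : Ω →ₘ[μ] ℝ) = (ρ (mavg t n) f : WS μ) := by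
  have e : mavg t n = (∏ i, (n i : ℝ))⁻¹ • ∑ k ∈ Fintype.piFinset (fun i => Finset.range (n i)), ∏ i, t i ^ k i := by
    simp only [mavg, aavg]
    rw [Finset.prod_smul, Finset.prod_univ_sum, Finset.prod_inv_distrib]
  rw [e, map_smul, map_sum, LinearMap.smul_apply, LinearMap.sum_apply, multiAvg]
  simp only [iterComp_eq ρ t T hT hρ]
  rw [Submodule.coe_smul, Submodule.coe_sum]

lemma main_abs (T : Fin d → (Ω →ₘ[μ] ℝ) → (Ω →ₘ[μ] ℝ)) (hT : ∀ i, IsPosDS μ (T i))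
    (hρ : ∀ i, ρ (t i) = (hT i).op) (f : Ω →ₘ[μ] ℝ) (hf : MemRmu μ f)
    (n : ℕ → Fin d → ℕ) (hn : ∀ i, Tendsto (fun k => n k i) atTop atTop)
    (hsec : InSector n) :
    ∃ fhat : Ω →ₘ[μ] ℝ, MemRmu μ fhat ∧
      AuTendsto μ atTop (fun k => multiAvg μ T (n k) f) fhat := by
  have hev : ∀ᶠ k in atTop, ∀ i, 1 ≤ n k i := eventually_all.mpr fun i => (hn i).eventually_ge_atTop 1
  obtain ⟨k0, hk0⟩ := eventually_atTop.mp hev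
  obtain ⟨c₀, hc⟩ := hsec
  set n' : ℕ → Fin d → ℕ := fun k => n (k + k0) with hn'
  have h1 : ∀ k i, 1 ≤ n' k i := fun k i => hk0 _ (Nat.le_add_left _ _) i
  have h2 : ∀ i, Tendsto (fun k => n' k i) atTop atTop := fun i => (tendsto_add_atTop_iff_nat (f := fun k => n k i) k0).mpr (hn i)
  have h3 : ∀ k i j, (n' k i : ℝ) ≤ c₀ * n' k j := by
    intro k i j
    have h := h1 k j
    have hp : (0:ℝ) < n' k j := by exact_mod_cast h
    rw [← div_le_iff₀ hp]
    exact hc (k + k0) i j (by change n' k j ≠ 0; omega)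
  have ht : ∀ i, PDS (ρ (t i)) := fun i => by rw [hρ]; exact (hT i).pds
  have hM : MaxIneq fun k => ρ (mavg t (n' k)) := maximal ρ t ht n' h1 c₀ h3
  have hfe := exc_of_Rmu hf
  set f' : WS μ := ⟨f, hf.1⟩ with hf'
  have hG := good_all ρ t n' hM ht h1 h2 f' hfe
  obtain ⟨g, hg, hau⟩ := good_conv (fun k => pds_mavg ρ t ht (n' k)) f' hG hfe
  refine ⟨g, hg, fun ε hε => ?_⟩
  obtain ⟨E, hE, hE1, hE2⟩ := hau ε hε
  refine ⟨E, hE, hE1, ?_⟩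
  rw [← tendsto_add_atTop_iff_nat k0]
  simp only [← multiAvg_eq ρ t T hT hρ] at hE2
  exact hE2

end limit

lemma exists_comm_alg {R : Type*} [Ring R] [Algebra ℝ R] {d : ℕ} (s : Fin d → R) (hs : ∀ i j, s i * s j = s j * s i) :
    ∃ (S : Subalgebra ℝ R), (∀ a b : S, a * b = b * a) ∧ ∀ i, s i ∈ S := by
  have := Algebra.isMulCommutative_adjoin ℝ (s := Set.range s) (by
    rintro _ ⟨i, rfl⟩ _ ⟨j, rfl⟩
    exact hs i j)
  exact ⟨Algebra.adjoin ℝ (Set.range s), fun a b => mul_comm' a b, fun i => Algebra.subset_adjoin ⟨i, rfl⟩⟩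

lemma exists_comm_alg2.{u} {R : Type u} [Ring R] [Algebra ℝ R] {d : ℕ} (s : Fin d → R) (hs : ∀ i j, s i * s j = s j * s i) :
    ∃ (A : Type u) (_ : CommRing A) (_ : Algebra ℝ A) (ρ : A →ₐ[ℝ] R) (t : Fin d → A), ∀ i, ρ (t i) = s i := by
  obtain ⟨S, hS, hm⟩ := exists_comm_alg s hs
  let I : CommRing S := { (inferInstance : Ring S) with mul_comm := hS }
  exact ⟨S, I, inferInstanceAs (Algebra ℝ S), S.val, fun i => ⟨s i, hm i⟩, fun i => rfl⟩

theorem multiparam_sector_au_Rmu (μ : Measure Ω) [SigmaFinite μ] {d : ℕ}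
    (T : Fin d → (Ω →ₘ[μ] ℝ) → (Ω →ₘ[μ] ℝ)) (hT : ∀ i, IsPosDS μ (T i))
    (hcomm : ∀ i j, ∀ f : Ω →ₘ[μ] ℝ, MemL1pLinf μ f → T i (T j f) = T j (T i f))
    (f : Ω →ₘ[μ] ℝ) (hf : MemRmu μ f)
    (n : ℕ → Fin d → ℕ) (hn : ∀ i, Tendsto (fun k => n k i) atTop atTop)
    (hsec : InSector n) :
    ∃ fhat : Ω →ₘ[μ] ℝ, MemRmu μ fhat ∧
      AuTendsto μ atTop (fun k => multiAvg μ T (n k) f) fhat := by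
  obtain ⟨A, iA, jA, ρ, t, hρ⟩ := exists_comm_alg2 (R := Module.End ℝ (WS μ)) (fun i => (hT i).op) (by
    intro i j
    refine LinearMap.ext fun u => Subtype.ext ?_
    exact hcomm i j u u.2)
  exact main_abs ρ t T hT hρ f hf n hn hsec
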